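/- arXiv:1408.5797 — 2 statements merged into one kernel-verified Lean document; each statement's English description precedes it below -/
import Mathlib

section
/- Let F ⊆ Sym²(ℝⁿ) be a convex ST-invariant cone subequation with finite Riesz characteristic p, where 2 < p < ∞, and set K_p(t) = −t^{2−p}. Let u be F-subharmonic and locally Lebesgue integrable on an open neighborhood of 0 in ℝⁿ. For x in this neighborhood and small t > 0 let V(u, x, t) denote the average of u over the closed ball B_t(x) = {y : |y−x| ≤ t}. Suppose that for some constant Θ ≥ 0 the rescaled functions u_r(x) = r^{p−2}·u(rx) converge to Θ·K_p(|x|) in L¹_loc(ℝⁿ) as r ↓ 0, i.e. ∫_{|x| ≤ R} |u_r(x) − Θ·K_p(|x|)| dx → 0 for every R > 0. Then for every x ≠ 0 sufficiently near 0 the volume density Θ^V(u, x) = lim_{t↓0} V(u, x, t)/K_p(t) exists, and Θ^V(u, x) → 0 as x → 0 with x ≠ 0. -/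
open Set Filter Topology Matrix

noncomputable section

abbrev EucSp (n : ℕ) := EuclideanSpace ℝ (Fin n)

/-- The rank-one orthogonal projection matrix `P_e = e eᵀ` associated to a vector `e`. -/
def projMat {n : ℕ} (e : EucSp n) : Matrix (Fin n) (Fin n) ℝ :=
  Matrix.of fun i j => e i * e j

/-- A (pure second-order, constant coefficient) subequation: a closed set of symmetric
matrices satisfying positivity `F + 𝒫 ⊆ F`. -/
def IsSubequation {n : ℕ} (F : Set (Matrix (Fin n) (Fin n) ℝ)) : Prop :=
  (∀ A ∈ F, A.IsSymm) ∧ IsClosed F ∧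
    ∀ A ∈ F, ∀ P : Matrix (Fin n) (Fin n) ℝ, P.PosSemidef → A + P ∈ F

/-- A cone subequation. -/
def IsConeSubequation {n : ℕ} (F : Set (Matrix (Fin n) (Fin n) ℝ)) : Prop :=
  IsSubequation F ∧ ∀ A ∈ F, ∀ t : ℝ, 0 ≤ t → t • A ∈ F

/-- `F` is invariant under a closed subgroup of `O(n)` acting transitively on the
unit sphere. -/
def STInvariant {n : ℕ} (F : Set (Matrix (Fin n) (Fin n) ℝ)) : Prop :=
  ∃ G : Set (Matrix (Fin n) (Fin n) ℝ),
    IsClosed G ∧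
    G ⊆ (Matrix.orthogonalGroup (Fin n) ℝ : Set (Matrix (Fin n) (Fin n) ℝ)) ∧
    (1 : Matrix (Fin n) (Fin n) ℝ) ∈ G ∧
    (∀ g ∈ G, ∀ h ∈ G, g * h ∈ G) ∧
    (∀ g ∈ G, g⁻¹ ∈ G) ∧
    (∀ x y : EucSp n, ‖x‖ = 1 → ‖y‖ = 1 → ∃ g ∈ G, Matrix.toEuclideanLin g x = y) ∧
    (∀ g ∈ G, ∀ A ∈ F, gᵀ * A * g ∈ F)

/-- The interior of `F` relative to the subspace `Sym²(ℝⁿ)` of symmetric matrices. -/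
def symInterior {n : ℕ} (F : Set (Matrix (Fin n) (Fin n) ℝ)) :
    Set (Matrix (Fin n) (Fin n) ℝ) :=
  {A | ∃ U ∈ 𝓝 A, ∀ B ∈ U, B.IsSymm → B ∈ F}

/-- The frontier of `F` relative to the subspace `Sym²(ℝⁿ)` of symmetric matrices. -/
def symFrontier {n : ℕ} (F : Set (Matrix (Fin n) (Fin n) ℝ)) :
    Set (Matrix (Fin n) (Fin n) ℝ) :=
  closure F \ symInterior F

/-- `F` has finite (increasing) Riesz characteristic `p`:
`P_{e⊥} − (p−1) P_e ∈ ∂F` for every unit vector `e`. -/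
def HasRieszChar {n : ℕ} (F : Set (Matrix (Fin n) (Fin n) ℝ)) (p : ℝ) : Prop :=
  1 ≤ p ∧ ∀ e : EucSp n, ‖e‖ = 1 →
    ((1 : Matrix (Fin n) (Fin n) ℝ) - projMat e) - (p - 1) • projMat e ∈ symFrontier F

/-- `F` has finite decreasing Riesz characteristic `q`:
`−P_{e⊥} + (q−1) P_e ∈ ∂F` for every unit vector `e`. -/
def HasDualRieszChar {n : ℕ} (F : Set (Matrix (Fin n) (Fin n) ℝ)) (q : ℝ) : Prop :=
  1 ≤ q ∧ ∀ e : EucSp n, ‖e‖ = 1 →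
    -((1 : Matrix (Fin n) (Fin n) ℝ) - projMat e) + (q - 1) • projMat e ∈ symFrontier F

/-- The Hessian matrix of a function `φ : ℝⁿ → ℝ` at `x`. -/
def hess {n : ℕ} (φ : EucSp n → ℝ) (x : EucSp n) : Matrix (Fin n) (Fin n) ℝ :=
  Matrix.of fun i j =>
    iteratedFDeriv ℝ 2 φ x ![EuclideanSpace.single i (1 : ℝ), EuclideanSpace.single j (1 : ℝ)]

/-- `u` is `F`-subharmonic (a viscosity subsolution) on `X`. -/
def IsFSubharmonicOn {n : ℕ} (F : Set (Matrix (Fin n) (Fin n) ℝ))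
    (X : Set (EucSp n)) (u : EucSp n → EReal) : Prop :=
  UpperSemicontinuousOn u X ∧ (∀ x ∈ X, u x < ⊤) ∧
    ∀ x₀ ∈ X, ∀ φ : EucSp n → ℝ, ContDiffAt ℝ 2 φ x₀ →
      (∀ᶠ x in 𝓝[X] x₀, u x ≤ ((φ x : ℝ) : EReal)) → u x₀ = ((φ x₀ : ℝ) : EReal) →
      hess φ x₀ ∈ F

/-- The dual subequation `F̃ = {A : −A ∉ Int F}` (interior relative to `Sym²(ℝⁿ)`). -/
def dualSubeq {n : ℕ} (F : Set (Matrix (Fin n) (Fin n) ℝ)) :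
    Set (Matrix (Fin n) (Fin n) ℝ) :=
  {A | A.IsSymm ∧ -A ∉ symInterior F}

/-- `u` is `F`-harmonic on `X`: `u` is `F`-subharmonic and `−u` is `F̃`-subharmonic. -/
def IsFHarmonicOn {n : ℕ} (F : Set (Matrix (Fin n) (Fin n) ℝ))
    (X : Set (EucSp n)) (u : EucSp n → ℝ) : Prop :=
  IsFSubharmonicOn F X (fun x => ((u x : ℝ) : EReal)) ∧
  IsFSubharmonicOn (dualSubeq F) X (fun x => ((-(u x) : ℝ) : EReal))

/-- The Riesz kernel `K_p`. -/
def rieszKernel (p t : ℝ) : ℝ :=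
  if p < 2 then t ^ (2 - p) else if p = 2 then Real.log t else -(t ^ (2 - p))

open MeasureTheory

/-- The volume average `V(u, x, t)` of `u` over the closed ball `B_t(x)`. -/
def ballAvg {n : ℕ} (u : EucSp n → EReal) (x : EucSp n) (t : ℝ) : ℝ :=
  ⨍ y in Metric.closedBall x t, (u y).toReal

/-!
For `F` convex, an `F`-subharmonic `u` satisfies `∑ k, ∂_{w k}² u ≥ 0` in the viscosity sense
whenever `∑ k, w k (w k)ᵀ` lies in the polar cone of `F`. These inequalities also hold in the sense
of distributions: write a test function as `f - l • ∑ k, ∂_{w k}² f` by Fourier transform, apply the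
maximum principle to this resolvent, and let `l → 0`. Being linear, they survive averaging over the
transitive group and mollification, which turns `u` into a smooth radial function without changing
its averages over balls about the chosen centre. For such a function the Riesz characteristic makes
`|x|^(2-p)` extremal, so comparison on spherical shells shows convexity in the variable `|x|^(2-p)`.

Thus `t ↦ V(u, x, t)` is convex in `t^(2-p)` for every centre `x`, which yields the density
`d(x) ≥ 0` and `d(x) (a^(2-p) - b^(2-p)) ≤ V(u, x, b) - V(u, x, a)` for `a < b`. Take `a = τ|x|`
and `b = |x|/2`. After multiplication by `|x|^(p-2)` the right-hand side consists of averages of the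
rescaled function `u_{|x|}` over balls about the unit vector `x/|x|` that stay away from `0`, where
`Θ K_p` is bounded by a constant independent of `τ`. So `d(x) (τ^(2-p) - 2^(p-2))` is bounded near
`0` independently of `τ`, and `τ^(2-p) → ∞` as `τ → 0`.
-/

open scoped SchwartzMap LineDeriv ContDiff Manifold Pointwise

section SecondDeriv

/-- `h` is differentiable near `t`, and its derivative has derivative `a` at `t`. -/
def HasSecondDerivAt (h : ℝ → ℝ) (a t : ℝ) : Prop :=
  ∃ h' : ℝ → ℝ, (∀ᶠ s in 𝓝 t, HasDerivAt h (h' s) s) ∧ HasDerivAt h' a t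

namespace HasSecondDerivAt

variable {h k : ℝ → ℝ} {a b t : ℝ}

theorem add (hh : HasSecondDerivAt h a t) (hk : HasSecondDerivAt k b t) :
    HasSecondDerivAt (fun s => h s + k s) (a + b) t := by
  obtain ⟨h', hh', hha⟩ := hh
  obtain ⟨k', hk', hkb⟩ := hk
  exact ⟨fun s => h' s + k' s, (hh'.and hk').mono fun s hs => hs.1.add hs.2, hha.add hkb⟩

theorem const_mul (c : ℝ) (hh : HasSecondDerivAt h a t) :
    HasSecondDerivAt (fun s => c * h s) (c * a) t := by
  obtain ⟨h', hh', hha⟩ := hh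
  exact ⟨fun s => c * h' s, hh'.mono fun s hs => hs.const_mul c, hha.const_mul c⟩

theorem nonpos_of_isLocalMax (hh : HasSecondDerivAt h a t) (hmax : IsLocalMax h t) : a ≤ 0 := by
  obtain ⟨h', hh', hha⟩ := hh
  have hderiv : deriv h =ᶠ[𝓝 t] h' := hh'.mono fun s hs => hs.deriv
  have hdd : deriv (deriv h) t = a := hderiv.deriv_eq.trans hha.deriv
  by_contra! hpos
  have hmin : IsLocalMin h t := isLocalMin_of_deriv_deriv_pos (hdd ▸ hpos) hmax.deriv_eq_zero
    hh'.self_of_nhds.continuousAt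
  have hconst : h =ᶠ[𝓝 t] fun _ => h t := by
    filter_upwards [hmax, hmin] with s h₁ h₂ using le_antisymm h₁ h₂
  refine hpos.ne' ?_
  rw [← hdd, hconst.deriv.deriv_eq]
  simp

end HasSecondDerivAt

theorem isLocalMax_comp_add_smul {E : Type*} [AddCommGroup E] [Module ℝ E] [TopologicalSpace E]
    [ContinuousAdd E] [ContinuousSMul ℝ E] {f : E → ℝ} {x : E} (h : IsLocalMax f x) (v : E) :
    IsLocalMax (fun s : ℝ => f (x + s • v)) 0 := by
  have hline : ContinuousAt (fun s : ℝ => x + s • v) 0 := by fun_prop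
  refine IsMaxFilter.comp_tendsto (g := fun s : ℝ => x + s • v) (l := 𝓝 x) ?_ ?_
  · rw [zero_smul, add_zero]
    exact h
  · simpa using hline.tendsto

end SecondDeriv

section FrameLaplacian

variable {E F G ι : Type*} [NormedAddCommGroup E] [InnerProductSpace ℝ E] [Fintype ι]
  [NormedAddCommGroup F] [NormedSpace ℝ F] [NormedAddCommGroup G] [NormedSpace ℝ G]
  {w : ι → E}

/-- The constant coefficient operator `∑ k, ∂_{w k} ∂_{w k}` attached to a finite family of vectors,
acting on Schwartz functions; every operator `f ↦ tr (S D²f)` with `S ≥ 0` is of this form. -/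
def frameLaplacian (w : ι → E) : 𝓢(E, F) →L[ℝ] 𝓢(E, F) :=
  ∑ k, LineDeriv.lineDerivOpCLM ℝ 𝓢(E, F) (w k) ∘L LineDeriv.lineDerivOpCLM ℝ 𝓢(E, F) (w k)

theorem frameLaplacian_eq_sum (w : ι → E) (f : 𝓢(E, F)) :
    frameLaplacian w f = ∑ k, ∂_{w k} (∂_{w k} f) := by
  simp [frameLaplacian]

theorem frameLaplacian_apply (w : ι → E) (f : 𝓢(E, F)) (x : E) :
    frameLaplacian w f x = ∑ k, (∂_{w k} (∂_{w k} f)) x := by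
  simp [frameLaplacian_eq_sum]

theorem tsupport_frameLaplacian_subset (w : ι → E) (f : 𝓢(E, F)) :
    tsupport (frameLaplacian w f) ⊆ tsupport f := by
  refine closure_minimal (fun x hx => by_contra fun hxf => hx ?_) (isClosed_tsupport _)
  have hk : ∀ k, (∂_{w k} (∂_{w k} f)) x = 0 := fun k => image_eq_zero_of_notMem_tsupport fun h =>
    hxf (SchwartzMap.tsupport_lineDerivOp_subset _ _
      (SchwartzMap.tsupport_lineDerivOp_subset _ _ h))
  simp [frameLaplacian_apply, hk]

theorem lineDerivOp_postcompCLM (T : F →L[ℝ] G) (v : E) (f : 𝓢(E, F)) :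
    ∂_{v} (SchwartzMap.postcompCLM T f) = SchwartzMap.postcompCLM T (∂_{v} f) := by
  ext x
  simp only [SchwartzMap.lineDerivOp_apply_eq_fderiv, SchwartzMap.postcompCLM_apply]
  exact congrArg (· v) (T.hasFDerivAt.comp x f.differentiableAt.hasFDerivAt).fderiv

theorem frameLaplacian_postcompCLM (T : F →L[ℝ] G) (w : ι → E) (f : 𝓢(E, F)) :
    frameLaplacian w (SchwartzMap.postcompCLM T f) =
      SchwartzMap.postcompCLM T (frameLaplacian w f) := by
  simp only [frameLaplacian_eq_sum, lineDerivOp_postcompCLM, map_sum]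

theorem hasDerivAt_comp_add_smul (f : 𝓢(E, F)) (x v : E) (t : ℝ) :
    HasDerivAt (fun s : ℝ => f (x + s • v)) ((∂_{v} f) (x + t • v)) t := by
  rw [SchwartzMap.lineDerivOp_apply_eq_fderiv]
  have hline : HasDerivAt (fun s : ℝ => x + s • v) v t := by
    simpa using ((hasDerivAt_id t).smul_const v).const_add x
  exact (f.hasFDerivAt (x + t • v)).comp_hasDerivAt t hline

theorem hasSecondDerivAt_comp_add_smul (f : 𝓢(E, ℝ)) (x v : E) :
    HasSecondDerivAt (fun s : ℝ => f (x + s • v)) ((∂_{v} (∂_{v} f)) x) 0 :=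
  ⟨fun s => (∂_{v} f) (x + s • v), .of_forall (hasDerivAt_comp_add_smul f x v), by
    simpa using hasDerivAt_comp_add_smul (∂_{v} f) x v 0⟩

theorem lineDerivOp_lineDerivOp_nonpos_of_isLocalMax {f : 𝓢(E, ℝ)} {x : E} (h : IsLocalMax f x)
    (v : E) : (∂_{v} (∂_{v} f)) x ≤ 0 :=
  (hasSecondDerivAt_comp_add_smul f x v).nonpos_of_isLocalMax (isLocalMax_comp_add_smul h v)

theorem frameLaplacian_nonpos_of_isLocalMax (w : ι → E) {f : 𝓢(E, ℝ)} {x : E}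
    (h : IsLocalMax f x) : frameLaplacian w f x ≤ 0 := by
  rw [frameLaplacian_apply]
  exact Finset.sum_nonpos fun k _ => lineDerivOp_lineDerivOp_nonpos_of_isLocalMax h (w k)

end FrameLaplacian

section Resolvent

variable {E ι : Type*} [NormedAddCommGroup E] [InnerProductSpace ℝ E] [FiniteDimensional ℝ E]
  [Fintype ι]

theorem le_of_sub_smul_frameLaplacian_le (w : ι → E) {l : ℝ} (hl : 0 ≤ l) {h : 𝓢(E, ℝ)} {C : ℝ}
    (hC : 0 ≤ C) (hle : ∀ x, (h - l • frameLaplacian w h) x ≤ C) (x : E) : h x ≤ C := by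
  by_contra! hx
  obtain ⟨y, hy⟩ := h.continuous.exists_forall_ge' x
    (((zero_at_infty h).eventually (gt_mem_nhds (hC.trans_lt hx))).mono fun _ => le_of_lt)
  have hLy := frameLaplacian_nonpos_of_isLocalMax w (Eventually.of_forall hy : IsLocalMax h y)
  have hley := hle y
  simp only [_root_.sub_apply, _root_.smul_apply, smul_eq_mul] at hley
  nlinarith [hy x, mul_nonneg hl (neg_nonneg.mpr hLy)]

theorem abs_le_of_abs_sub_smul_frameLaplacian_le (w : ι → E) {l : ℝ} (hl : 0 ≤ l) {h : 𝓢(E, ℝ)}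
    {C : ℝ} (hle : ∀ x, |(h - l • frameLaplacian w h) x| ≤ C) (x : E) : |h x| ≤ C := by
  have hC : 0 ≤ C := (abs_nonneg _).trans (hle x)
  have hneg : ∀ y, (-h - l • frameLaplacian w (-h)) y ≤ C := fun y => by
    have := neg_le_of_abs_le (hle y)
    simp only [_root_.sub_apply, _root_.smul_apply, _root_.neg_apply, map_neg] at this ⊢
    simp only [smul_eq_mul] at *
    linarith
  exact abs_le'.2 ⟨le_of_sub_smul_frameLaplacian_le w hl hC (fun y => le_of_abs_le (hle y)) x,
    le_of_sub_smul_frameLaplacian_le w hl hC hneg x⟩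

theorem nonneg_of_sub_smul_frameLaplacian_nonneg (w : ι → E) {l : ℝ} (hl : 0 ≤ l) {h : 𝓢(E, ℝ)}
    (hle : ∀ x, 0 ≤ (h - l • frameLaplacian w h) x) (x : E) : 0 ≤ h x := by
  have hneg : ∀ y, (-h - l • frameLaplacian w (-h)) y ≤ 0 := fun y => by
    have := hle y
    simp only [_root_.sub_apply, _root_.smul_apply, _root_.neg_apply, map_neg] at this ⊢
    simp only [smul_eq_mul] at *
    linarith
  simpa using le_of_sub_smul_frameLaplacian_le w hl le_rfl hneg x

theorem abs_sub_le_of_sub_smul_frameLaplacian_eq (w : ι → E) {l : ℝ} (hl : 0 ≤ l)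
    {h f : 𝓢(E, ℝ)} (hhf : h - l • frameLaplacian w h = f) {C : ℝ}
    (hC : ∀ x, |frameLaplacian w f x| ≤ C) (x : E) : |h x - f x| ≤ l * C := by
  have hL : frameLaplacian w h - l • frameLaplacian w (frameLaplacian w h) =
      frameLaplacian w f := by
    rw [← hhf, map_sub, map_smul]
  have hsub : h x - f x = l * frameLaplacian w h x := by
    simp [← hhf]
  rw [hsub, abs_mul, abs_of_nonneg hl]
  gcongr
  exact abs_le_of_abs_sub_smul_frameLaplacian_le w hl (hL ▸ hC) x

theorem abs_sub_sub_le_of_sub_smul_frameLaplacian_eq (w : ι → E) {l : ℝ} (hl : 0 ≤ l)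
    {h f : 𝓢(E, ℝ)} (hhf : h - l • frameLaplacian w h = f) {C : ℝ}
    (hC : ∀ x, |frameLaplacian w (frameLaplacian w f) x| ≤ C) (x : E) :
    |h x - f x - l * frameLaplacian w f x| ≤ l ^ 2 * C := by
  have hL : frameLaplacian w h - l • frameLaplacian w (frameLaplacian w h) =
      frameLaplacian w f := by
    rw [← hhf, map_sub, map_smul]
  have hsub : h x - f x - l * frameLaplacian w f x =
      l * (frameLaplacian w h x - frameLaplacian w f x) := by
    have : h x - f x = l * frameLaplacian w h x := by simp [← hhf]
    rw [this, mul_sub]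
  rw [hsub, abs_mul, abs_of_nonneg hl, sq, mul_assoc]
  gcongr
  exact abs_sub_le_of_sub_smul_frameLaplacian_eq w hl hL hC x

variable [MeasurableSpace E] [BorelSpace E]

theorem integrable_mul_schwartz (f g : 𝓢(E, ℝ)) : Integrable (fun x => f x * g x) :=
  (SchwartzMap.pairing (ContinuousLinearMap.mul ℝ ℝ) f g).integrable

theorem integral_mul_frameLaplacian (w : ι → E) (f g : 𝓢(E, ℝ)) :
    ∫ x, f x * frameLaplacian w g x = ∫ x, frameLaplacian w f x * g x := by
  simp only [frameLaplacian_apply, Finset.mul_sum, Finset.sum_mul]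
  rw [integral_finsetSum _ fun _ _ => integrable_mul_schwartz _ _,
    integral_finsetSum _ fun _ _ => integrable_mul_schwartz _ _]
  refine Finset.sum_congr rfl fun k _ => ?_
  simp only [SchwartzMap.integral_mul_lineDerivOp_right_eq_neg_left, neg_neg]

open SchwartzMap in
theorem lineDerivOp_lineDerivOp_eq_fourierMultiplierCLM (v : E) (f : 𝓢(E, ℂ)) :
    ∂_{v} (∂_{v} f) =
      fourierMultiplierCLM ℂ (fun ξ => -((2 * Real.pi) ^ 2 * inner ℝ ξ v ^ 2)) f := by
  have hsymbol : (fun ξ : E => -((2 * Real.pi) ^ 2 * inner ℝ ξ v ^ 2)) =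
      (-(2 * Real.pi) ^ 2) • ((inner ℝ · v) * (inner ℝ · v)) := by
    ext ξ
    simp [sq]
  rw [hsymbol, fourierMultiplierCLM_smul (by fun_prop), _root_.smul_apply,
    ← fourierMultiplierCLM_fourierMultiplierCLM_apply (by fun_prop) (by fun_prop)]
  simp_rw [lineDeriv_eq_fourierMultiplierCLM]
  rw [← fourierMultiplierCLM_ofReal ℂ (g := (inner ℝ · v)) (by fun_prop)]
  simp_rw [← fourierMultiplierCLM_ofReal ℂ (g := (inner ℝ · v)) (by fun_prop), map_smul, smul_smul]
  ext x
  simp only [_root_.smul_apply, smul_eq_mul, Complex.real_smul]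
  congr 1
  push_cast
  ring_nf
  simp

open SchwartzMap in
theorem sub_smul_frameLaplacian_eq_fourierMultiplierCLM (w : ι → E) (l : ℝ) (f : 𝓢(E, ℂ)) :
    f - l • frameLaplacian w f =
      fourierMultiplierCLM ℂ (fun ξ => 1 + l * ∑ k, (2 * Real.pi) ^ 2 * inner ℝ ξ (w k) ^ 2) f := by
  have hsymbol : (fun ξ : E => 1 + l * ∑ k, (2 * Real.pi) ^ 2 * inner ℝ ξ (w k) ^ 2) =
      fun ξ => ∑ b : Option ι, b.elim (fun _ => 1)
        (fun k => (-l) • fun ξ => -((2 * Real.pi) ^ 2 * inner ℝ ξ (w k) ^ 2)) ξ := by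
    ext ξ
    simp [Fintype.sum_option, Finset.mul_sum]
  rw [hsymbol, fourierMultiplierCLM_sum ℂ
      (by rintro (_ | k) - <;> simp only [Option.elim] <;> fun_prop),
    _root_.sum_apply, Fintype.sum_option]
  simp only [Option.elim, fourierMultiplierCLM_const]
  simp_rw [frameLaplacian_eq_sum, lineDerivOp_lineDerivOp_eq_fourierMultiplierCLM, Finset.smul_sum,
    sub_eq_add_neg, ← Finset.sum_neg_distrib]
  congr 1
  · simp
  · refine Finset.sum_congr rfl fun k _ => ?_
    rw [fourierMultiplierCLM_smul (by fun_prop)]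
    simp

open SchwartzMap in
theorem exists_sub_smul_frameLaplacian_eq_complex (w : ι → E) {l : ℝ} (hl : 0 ≤ l) (f : 𝓢(E, ℂ)) :
    ∃ h : 𝓢(E, ℂ), h - l • frameLaplacian w h = f := by
  -- `‖A ξ‖²` is the symbol of `-l • frameLaplacian w`.
  let A : E →L[ℝ] EuclideanSpace ℝ ι := (EuclideanSpace.equiv ι ℝ).symm ∘L
    ContinuousLinearMap.pi fun k => (√l * (2 * Real.pi)) • innerSL ℝ (w k)
  have hA : ∀ ξ, ‖A ξ‖ ^ 2 = l * ∑ k, (2 * Real.pi) ^ 2 * inner ℝ ξ (w k) ^ 2 := fun ξ => by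
    rw [EuclideanSpace.norm_sq_eq, Finset.mul_sum]
    refine Finset.sum_congr rfl fun k _ => ?_
    simp [A, mul_pow, Real.sq_sqrt hl, real_inner_comm, mul_assoc]
  let m : E → ℝ := fun ξ => (1 + ‖A ξ‖ ^ 2) ^ (-1 : ℝ)
  have hm : m.HasTemperateGrowth :=
    (Function.hasTemperateGrowth_one_add_norm_sq_rpow _ (-1 : ℝ)).comp A.hasTemperateGrowth
  refine ⟨fourierMultiplierCLM ℂ m f, ?_⟩
  have hinv : (fun ξ => 1 + l * ∑ k, (2 * Real.pi) ^ 2 * inner ℝ ξ (w k) ^ 2) * m =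
      fun _ => (1 : ℝ) := by
    ext ξ
    simp only [Pi.mul_apply, ← hA, m, Real.rpow_neg_one]
    exact mul_inv_cancel₀ (by positivity)
  rw [sub_smul_frameLaplacian_eq_fourierMultiplierCLM,
    fourierMultiplierCLM_fourierMultiplierCLM_apply (by fun_prop) hm, hinv]
  simp

theorem exists_sub_smul_frameLaplacian_eq (w : ι → E) {l : ℝ} (hl : 0 ≤ l) (f : 𝓢(E, ℝ)) :
    ∃ h : 𝓢(E, ℝ), h - l • frameLaplacian w h = f := by
  obtain ⟨H, hH⟩ := exists_sub_smul_frameLaplacian_eq_complex w hl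
    (SchwartzMap.postcompCLM Complex.ofRealCLM f)
  refine ⟨SchwartzMap.postcompCLM Complex.reCLM H, ?_⟩
  rw [frameLaplacian_postcompCLM, ← map_smul, ← map_sub, hH]
  ext x
  simp

theorem integral_mul_eq_of_sub_smul_frameLaplacian_eq (w : ι → E) (l : ℝ) (f g : 𝓢(E, ℝ)) :
    ∫ x, f x * (g - l • frameLaplacian w g) x = ∫ x, (f - l • frameLaplacian w f) x * g x := by
  simp only [_root_.sub_apply, _root_.smul_apply, smul_eq_mul, mul_sub, sub_mul, mul_left_comm _ l,
    mul_assoc l]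
  rw [integral_sub (integrable_mul_schwartz _ _) ((integrable_mul_schwartz _ _).const_mul _),
    integral_sub (integrable_mul_schwartz _ _) ((integrable_mul_schwartz _ _).const_mul _),
    integral_const_mul, integral_const_mul, integral_mul_frameLaplacian]

end Resolvent

section ViscosityToDistribution

variable {E ι : Type*} [NormedAddCommGroup E] [InnerProductSpace ℝ E] [Fintype ι]

/-- `u` is a viscosity subsolution of `frameLaplacian w u ≥ 0` on `U`. The test functions are
Schwartz functions up to an additive constant. -/
def IsViscositySubsolutionOn (w : ι → E) (U : Set E) (u : E → EReal) : Prop :=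
  ∀ x₀ ∈ U, ∀ (f : 𝓢(E, ℝ)) (c : ℝ), (∀ᶠ x in 𝓝 x₀, u x ≤ ((f x + c : ℝ) : EReal)) →
    u x₀ = ((f x₀ + c : ℝ) : EReal) → 0 ≤ frameLaplacian w f x₀

theorem isViscositySubsolutionOn_coe_iff {w : ι → E} {U : Set E} {v : E → ℝ} :
    IsViscositySubsolutionOn w U (fun x => v x) ↔ ∀ x₀ ∈ U, ∀ f : 𝓢(E, ℝ),
      IsLocalMax (fun x => v x - f x) x₀ → 0 ≤ frameLaplacian w f x₀ := by
  simp only [IsViscositySubsolutionOn, EReal.coe_le_coe_iff, EReal.coe_eq_coe_iff]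
  refine forall₃_congr fun x₀ _ f => ⟨fun h hmax => ?_, fun h c hle heq => ?_⟩
  · refine h (v x₀ - f x₀) (hmax.mono fun x hx => ?_) (by ring)
    linarith
  · refine h (hle.mono fun x hx => ?_)
    linarith

theorem le_of_le_sub_smul_frameLaplacian {w : ι → E} {V : Set E} {v : E → ℝ} (hV : IsOpen V)
    (hVc : IsCompact (closure V)) (hv : UpperSemicontinuousOn v (closure V))
    (hvisc : IsViscositySubsolutionOn w V fun x => v x) {l : ℝ} (hl : 0 ≤ l) {g : 𝓢(E, ℝ)}
    (hg : ∀ x ∈ V, v x ≤ (g - l • frameLaplacian w g) x) (hfr : ∀ x ∈ frontier V, v x ≤ g x) :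
    ∀ x ∈ closure V, v x ≤ g x := by
  intro x hx
  obtain ⟨x₀, hx₀, hmax⟩ := UpperSemicontinuousOn.exists_isMaxOn (f := fun x => v x + (-g) x)
    ⟨x, hx⟩ hVc (hv.add ((-g).continuous.upperSemicontinuous.upperSemicontinuousOn _))
  have hle : ∀ y ∈ closure V, v y - g y ≤ v x₀ - g x₀ := fun y hy => by
    simpa [sub_eq_add_neg] using hmax hy
  suffices v x₀ ≤ g x₀ by linarith [hle x hx]
  by_cases hx₀V : x₀ ∈ V
  · have hL : 0 ≤ frameLaplacian w g x₀ := isViscositySubsolutionOn_coe_iff.1 hvisc x₀ hx₀V g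
      (mem_of_superset (hV.mem_nhds hx₀V) fun y hy => hle y (subset_closure hy))
    have := hg x₀ hx₀V
    simp only [_root_.sub_apply, _root_.smul_apply, smul_eq_mul] at this
    nlinarith [mul_nonneg hl hL]
  · exact hfr x₀ (hV.frontier_eq ▸ ⟨hx₀, hx₀V⟩)

variable [FiniteDimensional ℝ E]

theorem exists_schwartz_cutoff {K U : Set E} (hK : IsCompact K) (hU : IsOpen U) (hKU : K ⊆ U) :
    ∃ χ : 𝓢(E, ℝ), (∀ x ∈ K, χ x = 1) ∧ HasCompactSupport χ ∧ tsupport χ ⊆ U ∧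
      ∀ x, χ x ∈ Icc (0 : ℝ) 1 := by
  obtain ⟨L, hL, hKL, hLU⟩ := exists_compact_between hK hU hKU
  obtain ⟨f, hf1, hf0, hf⟩ := exists_contMDiffMap_one_nhds_of_subset_interior (n := (⊤ : ℕ∞))
    𝓘(ℝ, E) hK.isClosed hKL
  have hsupp : tsupport f ⊆ L := closure_minimal
    (fun x hx => by_contra fun hxL => hx (hf0 x hxL)) hL.isClosed
  have hcs : HasCompactSupport f := hL.of_isClosed_subset (isClosed_tsupport _) hsupp
  exact ⟨hcs.toSchwartzMap (contMDiff_iff_contDiff.mp f.contMDiff),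
    fun x => hf1.self_of_nhdsSet x, hcs, hsupp.trans hLU, hf⟩

variable [MeasurableSpace E] [BorelSpace E]

theorem integrable_mul_schwartz_of_integrable {f : E → ℝ} (hf : Integrable f) (g : 𝓢(E, ℝ)) :
    Integrable (fun x => f x * g x) :=
  hf.mul_bdd (c := SchwartzMap.seminorm ℝ 0 0 g) g.continuous.aestronglyMeasurable
    (Eventually.of_forall (g.norm_le_seminorm ℝ))

theorem exists_contDiff_gt_integral_le {f : E → ℝ} (hf : UpperSemicontinuous f)
    (hfi : Integrable f) {ε : ℝ} (hε : 0 < ε) :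
    ∃ φ : E → ℝ, ContDiff ℝ ∞ φ ∧ (∀ x, f x < φ x) ∧
      ∃ g : E → ℝ, Integrable g ∧ (∀ᵐ x, φ x ≤ g x) ∧ ∫ x, g x ≤ (∫ x, f x) + ε := by
  obtain ⟨g, hfg, hg, hgi, hgtop, hgint⟩ := exists_lt_lowerSemicontinuous_integral_lt f hfi hε
  obtain ⟨φ, hφ⟩ := exists_contMDiffMap_forall_mem_convex_of_local_const (n := (⊤ : ℕ∞)) 𝓘(ℝ, E)
    (t := fun x => {c : ℝ | f x < c ∧ (c : EReal) < g x})
    (fun x => (ordConnected_Ioi.inter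
      (ordConnected_Iio.preimage_mono EReal.coe_strictMono.monotone)).convex)
    fun x => by
      obtain ⟨c, hfc, hcg⟩ := EReal.lt_iff_exists_real_btwn.mp (hfg x)
      exact ⟨c, (hf x c (EReal.coe_lt_coe_iff.mp hfc)).and (hg x c hcg)⟩
  refine ⟨φ, contMDiff_iff_contDiff.mp φ.contMDiff, fun x => (hφ x).1, _, hgi, ?_, hgint.le⟩
  filter_upwards [hgtop] with x hx
  have hbot : g x ≠ ⊥ := ((EReal.bot_lt_coe (f x)).trans (hfg x)).ne'
  have := (hφ x).2
  rw [← EReal.coe_toReal hx.ne hbot] at this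
  exact (EReal.coe_lt_coe_iff.mp this).le

theorem exists_schwartz_ge_integral_le {f : E → ℝ} (hf : UpperSemicontinuous f)
    (hf0 : ∀ x, 0 ≤ f x) (hfi : Integrable f) (hfc : HasCompactSupport f) {ε : ℝ} (hε : 0 < ε) :
    ∃ φ : 𝓢(E, ℝ), (∀ x, f x ≤ φ x) ∧ ∫ x, φ x ≤ (∫ x, f x) + ε := by
  obtain ⟨φ, hφ, hfφ, g, hgi, hφg, hgint⟩ := exists_contDiff_gt_integral_le hf hfi hε
  have hφ0 : ∀ x, 0 ≤ φ x := fun x => (hf0 x).trans (hfφ x).le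
  obtain ⟨χ, hχ1, hχc, -, hχ⟩ := exists_schwartz_cutoff hfc isOpen_univ (subset_univ _)
  refine ⟨(hχc.mul_right (f' := φ)).toSchwartzMap ((χ.smooth _).mul hφ), fun x => ?_, ?_⟩
  · change f x ≤ χ x * φ x
    by_cases hx : x ∈ tsupport f
    · simpa [hχ1 x hx] using (hfφ x).le
    · rw [image_eq_zero_of_notMem_tsupport hx]
      exact mul_nonneg (hχ x).1 (hφ0 x)
  · refine (integral_mono_ae (SchwartzMap.integrable _) hgi ?_).trans hgint
    filter_upwards [hφg] with x hx
    exact (mul_le_of_le_one_left (hφ0 x) (hχ x).2).trans hx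

theorem integral_mul_le_of_majorant {w : ι → E} {V : Set E} {v : E → ℝ} (hV : IsOpen V)
    (hVc : IsCompact (closure V)) (hv : UpperSemicontinuousOn v (closure V))
    (hvi : Integrable v) (hvisc : IsViscositySubsolutionOn w V fun x => v x) {l : ℝ} (hl : 0 ≤ l)
    {φ B η Rη : 𝓢(E, ℝ)} {b : ℝ} (hφ0 : ∀ x, 0 ≤ φ x) (hvφ : ∀ x, v x ≤ φ x)
    (hB0 : ∀ x, 0 ≤ (B - l • frameLaplacian w B) x) (hBfr : ∀ x ∈ frontier V, v x ≤ B x)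
    (hBη : ∀ x ∈ tsupport η, B x ≤ b) (hη : ∀ x, 0 ≤ η x) (hηV : tsupport η ⊆ V)
    (hRη : Rη - l • frameLaplacian w Rη = η) :
    ∫ x, v x * η x ≤ (∫ x, φ x * Rη x) + b * ∫ x, η x := by
  obtain ⟨h, hh⟩ := exists_sub_smul_frameLaplacian_eq w hl φ
  have hh0 : ∀ x, 0 ≤ h x := nonneg_of_sub_smul_frameLaplacian_nonneg w hl (hh ▸ hφ0)
  have hsum : (h + B) - l • frameLaplacian w (h + B) = φ + (B - l • frameLaplacian w B) := by
    rw [← hh, map_add, smul_add]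
    abel
  have hcomp : ∀ x ∈ closure V, v x ≤ (h + B) x :=
    le_of_le_sub_smul_frameLaplacian hV hVc hv hvisc hl
      (fun x _ => hsum ▸ (hvφ x).trans (le_add_of_nonneg_right (hB0 x)))
      fun x hx => (hBfr x hx).trans (le_add_of_nonneg_left (hh0 x))
  have hpt : ∀ x, v x * η x ≤ h x * η x + b * η x := fun x => by
    rw [← add_mul]
    by_cases hx : x ∈ tsupport η
    · refine mul_le_mul_of_nonneg_right ((hcomp x (subset_closure (hηV hx))).trans ?_) (hη x)
      exact add_le_add_right (hBη x hx) _
    · simp [image_eq_zero_of_notMem_tsupport hx]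
  calc ∫ x, v x * η x ≤ ∫ x, (h x * η x + b * η x) :=
        integral_mono (integrable_mul_schwartz_of_integrable hvi η)
          ((integrable_mul_schwartz h η).add (η.integrable.const_mul b)) hpt
    _ = (∫ x, h x * η x) + b * ∫ x, η x := by
        rw [integral_add (integrable_mul_schwartz h η) (η.integrable.const_mul b),
          integral_const_mul]
    _ = (∫ x, φ x * Rη x) + b * ∫ x, η x := by
        rw [← hRη, integral_mul_eq_of_sub_smul_frameLaplacian_eq, hh]

theorem integral_mul_le_integral_mul_of_isViscositySubsolutionOn {w : ι → E} {V : Set E}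
    {v : E → ℝ} (hV : IsOpen V) (hVc : IsCompact (closure V)) (hv : UpperSemicontinuous v)
    (hv0 : ∀ x, 0 ≤ v x) (hvi : Integrable v) (hvc : HasCompactSupport v)
    (hvisc : IsViscositySubsolutionOn w V fun x => v x) {l : ℝ} (hl : 0 ≤ l)
    {B η Rη : 𝓢(E, ℝ)} {b : ℝ}
    (hB0 : ∀ x, 0 ≤ (B - l • frameLaplacian w B) x) (hBfr : ∀ x ∈ frontier V, v x ≤ B x)
    (hBη : ∀ x ∈ tsupport η, B x ≤ b) (hη : ∀ x, 0 ≤ η x) (hηV : tsupport η ⊆ V)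
    (hRη : Rη - l • frameLaplacian w Rη = η) :
    ∫ x, v x * η x ≤ (∫ x, v x * Rη x) + b * ∫ x, η x := by
  set C := SchwartzMap.seminorm ℝ 0 0 Rη
  have hC : ∀ x, Rη x ≤ C := fun x => (le_abs_self _).trans (Rη.norm_le_seminorm ℝ x)
  have : 0 ≤ C := apply_nonneg _ _
  refine le_of_forall_pos_le_add fun ε hε => ?_
  obtain ⟨φ, hvφ, hφ⟩ := exists_schwartz_ge_integral_le hv hv0 hvi hvc
    (show 0 < ε / (C + 1) by positivity)
  have hmaj := integral_mul_le_of_majorant hV hVc (hv.upperSemicontinuousOn _) hvi hvisc hl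
    (fun x => (hv0 x).trans (hvφ x)) hvφ hB0 hBfr hBη hη hηV hRη
  have hdiff : (∫ x, φ x * Rη x) - ∫ x, v x * Rη x ≤ ((∫ x, φ x) - ∫ x, v x) * C := by
    rw [← integral_sub (integrable_mul_schwartz φ Rη)
      (integrable_mul_schwartz_of_integrable hvi Rη), ← integral_sub φ.integrable hvi,
      ← integral_mul_const]
    refine integral_mono ((integrable_mul_schwartz φ Rη).sub
      (integrable_mul_schwartz_of_integrable hvi Rη)) ((φ.integrable.sub hvi).mul_const C)
      fun x => ?_
    simpa only [sub_mul] using mul_le_mul_of_nonneg_left (hC x) (sub_nonneg.2 (hvφ x))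
  have hsmall : ((∫ x, φ x) - ∫ x, v x) * C ≤ ε := by
    calc ((∫ x, φ x) - ∫ x, v x) * C ≤ ε / (C + 1) * C := by
          gcongr
          linarith
      _ ≤ ε := by
          rw [div_mul_eq_mul_div, div_le_iff₀ (by positivity)]
          nlinarith
  linarith

theorem exists_barrier (w : ι → E) {K L : Set E} (hK : IsCompact K) (hL : IsClosed L)
    (hKL : Disjoint K L) {M : ℝ} (hM : 0 ≤ M) :
    ∃ D : ℝ, ∀ᶠ l : ℝ in 𝓝[>] 0, ∃ B : 𝓢(E, ℝ), (∀ x, 0 ≤ (B - l • frameLaplacian w B) x) ∧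
      (∀ x ∈ K, M ≤ B x) ∧ ∀ x ∈ L, B x ≤ D * l ^ 2 := by
  obtain ⟨χ, hχK, -, hχL, hχ⟩ := exists_schwartz_cutoff hK hL.isOpen_compl
    (disjoint_left.1 hKL)
  set C₁ := SchwartzMap.seminorm ℝ 0 0 (frameLaplacian w χ)
  set C₂ := SchwartzMap.seminorm ℝ 0 0 (frameLaplacian w (frameLaplacian w χ))
  have hsmall : ∀ᶠ l : ℝ in 𝓝[>] 0, l * C₁ < 1 / 2 := by
    have : Tendsto (fun l : ℝ => l * C₁) (𝓝[>] 0) (𝓝 (0 * C₁)) :=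
      ((continuous_mul_const C₁).tendsto 0).mono_left nhdsWithin_le_nhds
    exact this.eventually (gt_mem_nhds (by norm_num))
  refine ⟨2 * M * C₂, ?_⟩
  filter_upwards [hsmall, self_mem_nhdsWithin] with l hlC (hl : 0 < l)
  obtain ⟨X, hX⟩ := exists_sub_smul_frameLaplacian_eq w hl.le χ
  have hX₁ := abs_sub_le_of_sub_smul_frameLaplacian_eq w hl.le hX
    ((frameLaplacian w χ).norm_le_seminorm ℝ)
  have hX₂ := abs_sub_sub_le_of_sub_smul_frameLaplacian_eq w hl.le hX
    ((frameLaplacian w (frameLaplacian w χ)).norm_le_seminorm ℝ)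
  refine ⟨(2 * M) • X, fun x => ?_, fun x hx => ?_, fun x hx => ?_⟩
  · rw [map_smul, smul_comm l, ← smul_sub, hX]
    exact mul_nonneg (by positivity) (hχ x).1
  · have := (abs_le.1 (hX₁ x)).1
    rw [hχK x hx] at this
    simp only [_root_.smul_apply, smul_eq_mul]
    nlinarith
  · have hχx : x ∉ tsupport χ := fun h => hχL h hx
    have := (abs_le.1 (hX₂ x)).2
    rw [image_eq_zero_of_notMem_tsupport hχx, image_eq_zero_of_notMem_tsupport
      fun h => hχx (tsupport_frameLaplacian_subset w χ h)] at this
    simp only [_root_.smul_apply, smul_eq_mul]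
    nlinarith

theorem integrable_of_upperSemicontinuous {f : E → ℝ} (hf : UpperSemicontinuous f)
    (hf0 : ∀ x, 0 ≤ f x) (hfc : HasCompactSupport f) : Integrable f := by
  obtain ⟨M, hM⟩ := (hf.upperSemicontinuousOn _).bddAbove_of_isCompact hfc
  refine (integrableOn_iff_integrable_of_support_subset (subset_tsupport f)).1
    (IntegrableOn.of_bound hfc.measure_lt_top hf.measurable.aestronglyMeasurable M
      (ae_restrict_of_forall_mem hfc.measurableSet fun x hx => ?_))
  rw [Real.norm_of_nonneg (hf0 x)]
  exact hM (mem_image_of_mem f hx)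

theorem integral_mul_le_of_sub_smul_frameLaplacian_eq {w : ι → E} {v : E → ℝ}
    (hv0 : ∀ x, 0 ≤ v x) (hvi : Integrable v) {l : ℝ} (hl : 0 ≤ l) {h η : 𝓢(E, ℝ)}
    (hh : h - l • frameLaplacian w h = η) {C : ℝ}
    (hC : ∀ x, |frameLaplacian w (frameLaplacian w η) x| ≤ C) :
    ∫ x, v x * h x ≤
      (∫ x, v x * η x) + l * (∫ x, v x * frameLaplacian w η x) + l ^ 2 * (C * ∫ x, v x) := by
  have hi := integrable_mul_schwartz_of_integrable hvi
  calc ∫ x, v x * h x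
      ≤ ∫ x, (v x * η x + l * (v x * frameLaplacian w η x) + l ^ 2 * (C * v x)) := by
        refine integral_mono (hi h) (((hi η).add ((hi _).const_mul l)).add
          ((hvi.const_mul C).const_mul (l ^ 2))) fun x => ?_
        have := (abs_le.1 (abs_sub_sub_le_of_sub_smul_frameLaplacian_eq w hl hh hC x)).2
        nlinarith [mul_le_mul_of_nonneg_left this (hv0 x)]
    _ = _ := by
        rw [integral_add (f := fun x => v x * η x + l * (v x * frameLaplacian w η x))
            ((hi η).add ((hi _).const_mul l)) ((hvi.const_mul C).const_mul _),
          integral_add (hi η) ((hi _).const_mul l), integral_const_mul, integral_const_mul,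
          integral_const_mul]

theorem integral_mul_frameLaplacian_nonneg_of_nonneg {w : ι → E} {V : Set E} {v : E → ℝ}
    (hV : IsOpen V) (hVc : IsCompact (closure V)) (hv : UpperSemicontinuous v)
    (hv0 : ∀ x, 0 ≤ v x) (hvc : HasCompactSupport v)
    (hvisc : IsViscositySubsolutionOn w V fun x => v x) {η : 𝓢(E, ℝ)}
    (hη : ∀ x, 0 ≤ η x) (hηV : tsupport η ⊆ V) :
    0 ≤ ∫ x, v x * frameLaplacian w η x := by
  have hvi := integrable_of_upperSemicontinuous hv hv0 hvc
  obtain ⟨M, hM⟩ := (hv.upperSemicontinuousOn _).bddAbove_of_isCompact hvc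
  have hvM : ∀ x, v x ≤ max M 0 := fun x => by
    by_cases hx : x ∈ tsupport v
    · exact (hM (mem_image_of_mem v hx)).trans (le_max_left _ _)
    · exact (image_eq_zero_of_notMem_tsupport hx).trans_le (le_max_right _ _)
  have hdisj : Disjoint (frontier V) (tsupport η) :=
    (disjoint_frontier_iff_isOpen.2 hV).mono_right hηV
  obtain ⟨D, hD⟩ := exists_barrier w (hVc.of_isClosed_subset isClosed_frontier
    frontier_subset_closure) (isClosed_tsupport η) hdisj (le_max_right M 0)
  set C := SchwartzMap.seminorm ℝ 0 0 (frameLaplacian w (frameLaplacian w η))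
  have key : ∀ᶠ l : ℝ in 𝓝[>] 0, 0 ≤ (∫ x, v x * frameLaplacian w η x) +
      l * ((C * ∫ x, v x) + D * ∫ x, η x) := by
    filter_upwards [hD, self_mem_nhdsWithin] with l ⟨B, hB0, hBfr, hBη⟩ (hl : 0 < l)
    obtain ⟨h, hh⟩ := exists_sub_smul_frameLaplacian_eq w hl.le η
    have hle := integral_mul_le_integral_mul_of_isViscositySubsolutionOn hV hVc hv hv0 hvi hvc
      hvisc hl.le hB0 (fun x hx => (hvM x).trans (hBfr x hx)) hBη hη hηV hh
    have hexp := integral_mul_le_of_sub_smul_frameLaplacian_eq hv0 hvi hl.le hh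
      ((frameLaplacian w (frameLaplacian w η)).norm_le_seminorm ℝ)
    refine nonneg_of_mul_nonneg_right (a := l) ?_ hl
    linarith
  have hlim : Tendsto (fun l : ℝ => (∫ x, v x * frameLaplacian w η x) +
      l * ((C * ∫ x, v x) + D * ∫ x, η x)) (𝓝[>] 0) (𝓝 (∫ x, v x * frameLaplacian w η x)) :=
    tendsto_nhdsWithin_of_tendsto_nhds (Continuous.tendsto' (by fun_prop) _ _ (by simp))
  exact ge_of_tendsto hlim key

end ViscosityToDistribution

section Truncation

variable {E : Type*}

/-- The function `max u (-N) + N` on `K`, extended by zero; the shift makes it nonnegative. -/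
def truncation (K : Set E) (u : E → EReal) (N : ℝ) : E → ℝ :=
  K.indicator fun x => (max (u x) ((-N : ℝ) : EReal)).toReal + N

theorem truncation_of_notMem {K : Set E} {x : E} (hx : x ∉ K) (u : E → EReal) (N : ℝ) :
    truncation K u N x = 0 :=
  indicator_of_notMem hx _

theorem coe_toReal_max_coe {a : EReal} (ha : a < ⊤) (b : ℝ) :
    ((max a (b : EReal)).toReal : EReal) = max a b :=
  EReal.coe_toReal (max_lt ha (EReal.coe_lt_top b)).ne
    ((EReal.bot_lt_coe b).trans_le (le_max_right _ _)).ne'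

theorem truncation_lt_iff {K : Set E} {u : E → EReal} {x : E} (hx : x ∈ K) (hu : u x < ⊤)
    {N y : ℝ} : truncation K u N x < y ↔ u x < ((y - N : ℝ) : EReal) ∧ 0 < y := by
  rw [truncation, indicator_of_mem hx, ← lt_sub_iff_add_lt, ← EReal.coe_lt_coe_iff,
    coe_toReal_max_coe hu, max_lt_iff, EReal.coe_lt_coe_iff, neg_lt_sub_iff_lt_add,
    lt_add_iff_pos_right]

theorem truncation_le_iff {K : Set E} {u : E → EReal} {x : E} (hx : x ∈ K) (hu : u x < ⊤)
    {N y : ℝ} : truncation K u N x ≤ y ↔ u x ≤ ((y - N : ℝ) : EReal) ∧ 0 ≤ y := by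
  rw [truncation, indicator_of_mem hx, ← le_sub_iff_add_le, ← EReal.coe_le_coe_iff,
    coe_toReal_max_coe hu, max_le_iff, EReal.coe_le_coe_iff, neg_le_sub_iff_le_add,
    le_add_iff_nonneg_left]

theorem truncation_nonneg {K : Set E} {u : E → EReal} (hu : ∀ x ∈ K, u x < ⊤) (N : ℝ) (x : E) :
    0 ≤ truncation K u N x := by
  by_cases hx : x ∈ K
  · exact ((truncation_le_iff hx (hu x hx)).1 le_rfl).2
  · exact (truncation_of_notMem hx u N).ge

theorem upperSemicontinuous_truncation [TopologicalSpace E] {K Ω : Set E} {u : E → EReal}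
    (hK : IsClosed K) (hΩ : IsOpen Ω) (hKΩ : K ⊆ Ω) (husc : UpperSemicontinuousOn u Ω)
    (hu : ∀ x ∈ K, u x < ⊤) (N : ℝ) : UpperSemicontinuous (truncation K u N) := by
  intro x y hy
  by_cases hx : x ∈ K
  · obtain ⟨hxy, hy0⟩ := (truncation_lt_iff hx (hu x hx)).1 hy
    have hev := husc x (hKΩ hx) _ hxy
    rw [hΩ.nhdsWithin_eq (hKΩ hx)] at hev
    filter_upwards [hev] with z hz
    by_cases hzK : z ∈ K
    · exact (truncation_lt_iff hzK (hu z hzK)).2 ⟨hz, hy0⟩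
    · rwa [truncation_of_notMem hzK]
  · filter_upwards [hK.isOpen_compl.mem_nhds hx] with z hz
    rwa [truncation_of_notMem hz, ← truncation_of_notMem hx u N]

theorem isViscositySubsolutionOn_truncation {ι : Type*} [NormedAddCommGroup E]
    [InnerProductSpace ℝ E] [Fintype ι] {w : ι → E} {K U : Set E} {u : E → EReal} (hU : IsOpen U)
    (hUK : U ⊆ K) (hu : ∀ x ∈ K, u x < ⊤) (hvisc : IsViscositySubsolutionOn w U u) (N : ℝ) :
    IsViscositySubsolutionOn w U fun x => truncation K u N x := by
  intro x₀ hx₀ f c hle heq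
  simp only [EReal.coe_le_coe_iff, EReal.coe_eq_coe_iff] at hle heq
  have hu₀ := hu x₀ (hUK hx₀)
  by_cases hzero : truncation K u N x₀ = 0
  · rw [← neg_nonpos, ← _root_.neg_apply, ← map_neg]
    refine frameLaplacian_nonpos_of_isLocalMax w (hle.mono fun x hx => ?_)
    have := truncation_nonneg hu N x
    simp only [_root_.neg_apply]
    linarith
  · have hpos := (truncation_nonneg hu N x₀).lt_of_ne' hzero
    refine hvisc x₀ hx₀ f (c - N) ?_ (le_antisymm ?_ (not_lt.1 fun hlt => ?_))
    · filter_upwards [hle, hU.mem_nhds hx₀] with x hx hxU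
      rw [← add_sub_assoc]
      exact ((truncation_le_iff (hUK hxU) (hu x (hUK hxU))).1 hx).1
    · rw [← add_sub_assoc]
      exact ((truncation_le_iff (hUK hx₀) hu₀).1 heq.le).1
    · rw [← add_sub_assoc, ← heq] at hlt
      exact lt_irrefl _ ((truncation_lt_iff (hUK hx₀) hu₀).2 ⟨hlt, hpos⟩)

theorem truncation_sub_eq_max {K : Set E} {u : E → EReal} {x : E} (hx : x ∈ K) (hu : u x < ⊤)
    (hu' : u x ≠ ⊥) (N : ℝ) : truncation K u N x - N = max (u x).toReal (-N) := by
  rw [truncation, indicator_of_mem hx, add_sub_cancel_right, ← EReal.coe_eq_coe_iff,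
    coe_toReal_max_coe hu, EReal.coe_strictMono.monotone.map_max, EReal.coe_toReal hu.ne hu']

theorem abs_truncation_sub_le {K : Set E} {u : E → EReal} {x : E} (hx : x ∈ K) (hu : u x < ⊤)
    (hu' : u x ≠ ⊥) {N : ℝ} (hN : 0 ≤ N) : |truncation K u N x - N| ≤ |(u x).toReal| := by
  rw [truncation_sub_eq_max hx hu hu', abs_le]
  exact ⟨(neg_abs_le _).trans (le_max_left _ _), max_le (le_abs_self _)
    ((neg_nonpos.2 hN).trans (abs_nonneg _))⟩

theorem eventually_truncation_sub_eq {K : Set E} {u : E → EReal} {x : E} (hx : x ∈ K)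
    (hu : u x < ⊤) (hu' : u x ≠ ⊥) :
    ∀ᶠ N : ℕ in atTop, truncation K u N x - N = (u x).toReal := by
  filter_upwards [eventually_ge_atTop ⌈-(u x).toReal⌉₊] with N hN
  rw [truncation_sub_eq_max hx hu hu', max_eq_left (neg_le.1 (Nat.ceil_le.1 hN))]

end Truncation

section FrameLaplacianNonneg

variable {E ι : Type*} [NormedAddCommGroup E] [InnerProductSpace ℝ E] [FiniteDimensional ℝ E]
  [MeasurableSpace E] [BorelSpace E] [Fintype ι]

theorem integral_lineDerivOp_eq_zero (v : E) (f : 𝓢(E, ℝ)) : ∫ x, (∂_{v} f) x = 0 := by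
  simpa [SchwartzMap.lineDerivOp_apply_eq_fderiv] using
    integral_mul_fderiv_eq_neg_fderiv_mul_of_integrable (μ := volume) (v := v)
      (f := fun _ : E => (1 : ℝ)) (g := f) (by simp)
      (by simpa [SchwartzMap.lineDerivOp_apply_eq_fderiv] using (∂_{v} f).integrable)
      (by simpa using f.integrable) (by fun_prop) fun x _ => f.differentiableAt

theorem integral_frameLaplacian (w : ι → E) (η : 𝓢(E, ℝ)) : ∫ x, frameLaplacian w η x = 0 := by
  simp only [frameLaplacian_apply]
  rw [integral_finsetSum _ fun _ _ => SchwartzMap.integrable _]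
  exact Finset.sum_eq_zero fun k _ => integral_lineDerivOp_eq_zero (w k) _

theorem integrable_mul_of_tsupport_subset {Ω : Set E} {f g : E → ℝ}
    (hf : LocallyIntegrableOn f Ω) (hg : Continuous g) (hgc : HasCompactSupport g)
    (hgΩ : tsupport g ⊆ Ω) : Integrable fun x => f x * g x := by
  refine (integrableOn_iff_integrable_of_support_subset ?_).1
    ((hf.integrableOn_compact_subset hgΩ hgc).mul_continuousOn hg.continuousOn hgc)
  exact (Function.support_mul_subset_right _ _).trans (subset_tsupport g)

theorem integral_sub_const_mul_frameLaplacian {f : E → ℝ} (hf : Integrable f) (c : ℝ) (w : ι → E)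
    (η : 𝓢(E, ℝ)) :
    ∫ x, (f x - c) * frameLaplacian w η x = ∫ x, f x * frameLaplacian w η x := by
  simp only [sub_mul]
  rw [integral_sub (integrable_mul_schwartz_of_integrable hf _)
    ((SchwartzMap.integrable _).const_mul c), integral_const_mul, integral_frameLaplacian,
    mul_zero, sub_zero]

theorem integral_toReal_mul_frameLaplacian_nonneg {w : ι → E} {Ω : Set E} (hΩ : IsOpen Ω)
    {u : E → EReal} (husc : UpperSemicontinuousOn u Ω) (hu : ∀ x ∈ Ω, u x < ⊤)
    (hae : ∀ᵐ x, x ∈ Ω → u x ≠ ⊥) (hloc : LocallyIntegrableOn (fun x => (u x).toReal) Ω)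
    (hvisc : IsViscositySubsolutionOn w Ω u) {η : 𝓢(E, ℝ)} (hη : ∀ x, 0 ≤ η x)
    (hηc : HasCompactSupport η) (hηΩ : tsupport η ⊆ Ω) :
    0 ≤ ∫ x, (u x).toReal * frameLaplacian w η x := by
  obtain ⟨V, hV, hηV, hVΩ, hVc⟩ := exists_open_between_and_isCompact_closure hηc hΩ hηΩ
  set K := closure V
  have huK : ∀ x ∈ K, u x < ⊤ := fun x hx => hu x (hVΩ hx)
  have hsupp := tsupport_frameLaplacian_subset w η
  have hLη : ∀ x ∉ K, frameLaplacian w η x = 0 := fun x hx =>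
    image_eq_zero_of_notMem_tsupport fun h => hx (subset_closure (hηV (hsupp h)))
  have htc : ∀ N, HasCompactSupport (truncation K u N) := fun N =>
    HasCompactSupport.intro hVc fun x hx => truncation_of_notMem hx u N
  have husct := upperSemicontinuous_truncation isClosed_closure hΩ hVΩ husc huK
  have hti : ∀ N, Integrable (truncation K u N) := fun N =>
    integrable_of_upperSemicontinuous (husct N) (truncation_nonneg huK N) (htc N)
  have hpos : ∀ N : ℕ, 0 ≤ ∫ x, (truncation K u N x - N) * frameLaplacian w η x := fun N => by
    rw [integral_sub_const_mul_frameLaplacian (hti N)]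
    exact integral_mul_frameLaplacian_nonneg_of_nonneg hV hVc (husct N)
      (truncation_nonneg huK N) (htc N) (isViscositySubsolutionOn_truncation hV subset_closure huK
        (fun x hx => hvisc x (hVΩ (subset_closure hx))) N) hη hηV
  have hbound := integrable_mul_of_tsupport_subset hloc (frameLaplacian w η).continuous
    (hηc.of_isClosed_subset (isClosed_tsupport _) hsupp) (hsupp.trans hηΩ)
  refine ge_of_tendsto' (tendsto_integral_of_dominated_convergence _ (fun N => ?_) hbound.norm
    (fun N => ?_) ?_) hpos
  · exact ((hti N).aestronglyMeasurable.sub aestronglyMeasurable_const).mul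
      (frameLaplacian w η).continuous.aestronglyMeasurable
  · filter_upwards [hae] with x hx
    by_cases hxK : x ∈ K
    · rw [norm_mul, norm_mul]
      gcongr
      exact abs_truncation_sub_le hxK (huK x hxK) (hx (hVΩ hxK)) N.cast_nonneg
    · simp [hLη x hxK]
  · filter_upwards [hae] with x hx
    by_cases hxK : x ∈ K
    · refine Tendsto.mul_const _ (tendsto_const_nhds.congr' ?_)
      exact (eventually_truncation_sub_eq hxK (huK x hxK) (hx (hVΩ hxK))).mono fun _ => Eq.symm
    · simp [hLη x hxK]

end FrameLaplacianNonneg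

section PolarFrame

theorem exists_clm_nonneg_and_neg {E : Type*} [AddCommGroup E] [Module ℝ E] [TopologicalSpace E]
    [IsTopologicalAddGroup E] [ContinuousSMul ℝ E] [LocallyConvexSpace ℝ E] {F : Set E}
    (hF : IsClosed F) (hconv : Convex ℝ F) (hcone : ∀ A ∈ F, ∀ t : ℝ, 0 ≤ t → t • A ∈ F)
    (h0 : (0 : E) ∈ F) {B : E} (hB : B ∉ F) :
    ∃ f : E →L[ℝ] ℝ, (∀ A ∈ F, 0 ≤ f A) ∧ f B < 0 := by
  obtain ⟨f, c, hfB, hfF⟩ := geometric_hahn_banach_point_closed hconv hF hB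
  have hc : c < 0 := by simpa using hfF 0 h0
  refine ⟨f, fun A hA => ?_, hfB.trans hc⟩
  by_contra! hneg
  have := hfF _ (hcone A hA (c / f A) (div_nonneg_of_nonpos hc.le hneg.le))
  rw [map_smul, smul_eq_mul, div_mul_cancel₀ _ hneg.ne] at this
  exact lt_irrefl _ this

section TracePairing

variable {ι : Type*} [Fintype ι]

theorem exists_isSymm_eq_trace_mul (f : Matrix ι ι ℝ →ₗ[ℝ] ℝ) :
    ∃ S : Matrix ι ι ℝ, S.IsSymm ∧ ∀ A : Matrix ι ι ℝ, A.IsSymm → f A = (S * A).trace := by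
  classical
  set T : Matrix ι ι ℝ := Matrix.of fun i j => f (Matrix.single j i 1)
  have hT : ∀ A, f A = (T * A).trace := fun A => by
    conv_lhs => rw [Matrix.matrix_eq_sum_single A, Finset.sum_comm]
    simp only [map_sum, Matrix.trace, Matrix.diag_apply, Matrix.mul_apply, T, Matrix.of_apply]
    refine Finset.sum_congr rfl fun i _ => Finset.sum_congr rfl fun j _ => ?_
    rw [mul_comm, ← smul_eq_mul, ← map_smul, Matrix.smul_single, smul_eq_mul, mul_one]
  refine ⟨(2⁻¹ : ℝ) • (T + Tᵀ), ?_, fun A hA => ?_⟩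
  · rw [Matrix.IsSymm, Matrix.transpose_smul, Matrix.transpose_add, Matrix.transpose_transpose,
      add_comm]
  · have htr : (Tᵀ * A).trace = (T * A).trace := by
      rw [← Matrix.trace_transpose, Matrix.transpose_mul, Matrix.transpose_transpose, hA.eq,
        Matrix.trace_mul_comm]
    rw [hT, smul_mul_assoc, Matrix.trace_smul, add_mul, Matrix.trace_add, htr, smul_eq_mul]
    ring

open scoped MatrixOrder in
theorem exists_eq_sum_dotProduct_mulVec (f : Matrix ι ι ℝ →ₗ[ℝ] ℝ)
    (hf : ∀ A : Matrix ι ι ℝ, A.PosSemidef → 0 ≤ f A) :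
    ∃ w : ι → EuclideanSpace ℝ ι, ∀ A : Matrix ι ι ℝ, A.IsSymm →
      f A = ∑ k, w k ⬝ᵥ A *ᵥ w k := by
  classical
  obtain ⟨S, hSsymm, hS⟩ := exists_isSymm_eq_trace_mul f
  have hSpos : S.PosSemidef := by
    refine Matrix.PosSemidef.of_dotProduct_mulVec_nonneg hSsymm fun x => ?_
    have hx : (Matrix.vecMulVec x x).PosSemidef := Matrix.posSemidef_vecMulVec_self_star x
    have := hf _ hx
    rwa [hS _ (Matrix.transpose_vecMulVec x x), Matrix.mul_vecMulVec, Matrix.trace_vecMulVec,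
      dotProduct_comm] at this
  obtain ⟨C, rfl⟩ := CStarAlgebra.nonneg_iff_eq_star_mul_self.1 hSpos.nonneg
  refine ⟨fun k => WithLp.toLp 2 (C k), fun A hA => ?_⟩
  rw [hS A hA, mul_assoc, Matrix.trace_mul_comm, mul_assoc]
  rfl

end TracePairing

variable {n : ℕ} {F : Set (Matrix (Fin n) (Fin n) ℝ)}

/-- The matrices `w k (w k)ᵀ` sum to an element of the polar cone of `F`, for the trace pairing. -/
def IsPolarFrame {ι : Type*} [Fintype ι] (F : Set (Matrix (Fin n) (Fin n) ℝ)) (w : ι → EucSp n) :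
    Prop :=
  ∀ A ∈ F, 0 ≤ ∑ k, w k ⬝ᵥ A *ᵥ w k

theorem dotProduct_hess_mulVec (φ : EucSp n → ℝ) (x v : EucSp n) :
    v ⬝ᵥ hess φ x *ᵥ v = iteratedFDeriv ℝ 2 φ x ![v, v] := by
  have hv : v = ∑ i, v i • EuclideanSpace.single i (1 : ℝ) := by
    ext j
    simp [Finset.sum_apply, Pi.single_apply]
  simp only [dotProduct, Matrix.mulVec, hess, Matrix.of_apply, iteratedFDeriv_two_apply,
    Matrix.cons_val_zero, Matrix.cons_val_one]
  conv_rhs => rw [hv]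
  simp only [map_sum, map_smul, _root_.smul_apply, smul_eq_mul, _root_.sum_apply, Finset.mul_sum]
  rw [Finset.sum_comm]
  refine Finset.sum_congr rfl fun i _ => Finset.sum_congr rfl fun j _ => ?_
  ring

theorem hess_add_const {φ : EucSp n → ℝ} {x : EucSp n} (hφ : ContDiffAt ℝ 2 φ x) (c : ℝ) :
    hess (fun y => φ y + c) x = hess φ x := by
  ext i j
  simp only [hess, Matrix.of_apply]
  rw [fun_iteratedFDeriv_add_apply hφ contDiffAt_const, iteratedFDeriv_const_of_ne (by norm_num)]
  simp

theorem frameLaplacian_eq_sum_dotProduct_hess_mulVec {ι : Type*} [Fintype ι] (w : ι → EucSp n)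
    (f : 𝓢(EucSp n, ℝ)) (x : EucSp n) :
    frameLaplacian w f x = ∑ k, w k ⬝ᵥ hess f x *ᵥ w k := by
  rw [frameLaplacian_apply]
  refine Finset.sum_congr rfl fun k _ => ?_
  rw [dotProduct_hess_mulVec, ← SchwartzMap.iteratedLineDerivOp_eq_iteratedFDeriv]
  rfl

theorem IsPolarFrame.isViscositySubsolutionOn {ι : Type*} [Fintype ι] {w : ι → EucSp n}
    (hw : IsPolarFrame F w) {X : Set (EucSp n)} {u : EucSp n → EReal}
    (hu : IsFSubharmonicOn F X u) : IsViscositySubsolutionOn w X u := fun x₀ hx₀ f c hle heq => by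
  rw [frameLaplacian_eq_sum_dotProduct_hess_mulVec,
    ← hess_add_const (f.smooth 2).contDiffAt c]
  exact hw _ (hu.2.2 x₀ hx₀ _ ((f.smooth 2).contDiffAt.add contDiffAt_const)
    (hle.filter_mono nhdsWithin_le_nhds) heq)

theorem IsPolarFrame.map_toEuclideanCLM {ι : Type*} [Fintype ι] {w : ι → EucSp n}
    (hw : IsPolarFrame F w) {g : Matrix (Fin n) (Fin n) ℝ} (hg : ∀ A ∈ F, gᵀ * A * g ∈ F) :
    IsPolarFrame F fun k => Matrix.toEuclideanCLM (𝕜 := ℝ) g (w k) := fun A hA => by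
  refine (hw _ (hg A hA)).trans_eq (Finset.sum_congr rfl fun k _ => ?_)
  rw [Matrix.ofLp_toEuclideanCLM, ← Matrix.mulVec_mulVec, ← Matrix.mulVec_mulVec,
    Matrix.dotProduct_mulVec _ gᵀ, Matrix.vecMul_transpose]

/-- The matrix `P_{e⊥} - (p - 1) P_e` whose position relative to `F` defines the Riesz
characteristic. -/
def rieszMatrix (p : ℝ) (e : EucSp n) : Matrix (Fin n) (Fin n) ℝ :=
  (1 - projMat e) - (p - 1) • projMat e

theorem dotProduct_self_eq_norm_sq (v : EucSp n) : v ⬝ᵥ v.ofLp = ‖v‖ ^ 2 := by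
  rw [← real_inner_self_eq_norm_sq, EuclideanSpace.inner_eq_star_dotProduct, star_trivial]

theorem dotProduct_rieszMatrix_mulVec (p : ℝ) (e v : EucSp n) :
    v ⬝ᵥ rieszMatrix p e *ᵥ v = ‖v‖ ^ 2 - p * inner ℝ e v ^ 2 := by
  have hproj : v ⬝ᵥ projMat e *ᵥ v = inner ℝ e v ^ 2 := by
    change v ⬝ᵥ Matrix.vecMulVec e e *ᵥ v = _
    rw [Matrix.vecMulVec_mulVec, EuclideanSpace.inner_eq_star_dotProduct]
    simp [dotProduct_comm, sq]
  rw [rieszMatrix, Matrix.sub_mulVec, Matrix.sub_mulVec, Matrix.smul_mulVec, dotProduct_sub,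
    dotProduct_sub, dotProduct_smul, Matrix.one_mulVec, dotProduct_self_eq_norm_sq, hproj,
    smul_eq_mul]
  ring

theorem eventually_posSemidef_sub_add_smul_one (A : Matrix (Fin n) (Fin n) ℝ) (hA : A.IsSymm)
    {ε : ℝ} (hε : 0 < ε) : ∀ᶠ B in 𝓝 A, B.IsSymm → (B - A + ε • 1).PosSemidef := by
  have hcont : Continuous fun B : Matrix (Fin n) (Fin n) ℝ =>
      ‖Matrix.toEuclideanCLM (𝕜 := ℝ) (B - A)‖ :=
    ((Matrix.toEuclideanCLM (n := Fin n) (𝕜 := ℝ)).toAlgEquiv.toLinearMap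
      |>.continuous_of_finiteDimensional.comp (continuous_sub_right A)).norm
  have hev := hcont.tendsto A
  rw [sub_self, map_zero, norm_zero] at hev
  filter_upwards [hev.eventually (gt_mem_nhds hε)] with B hB hBsymm
  refine Matrix.PosSemidef.of_dotProduct_mulVec_nonneg
    ((hBsymm.sub hA).add (Matrix.isSymm_one.smul ε)) fun x => ?_
  set y : EucSp n := WithLp.toLp 2 x
  have hinner : -(ε * ‖y‖ ^ 2) ≤ x ⬝ᵥ (B - A) *ᵥ x := by
    rw [← Matrix.inner_toEuclideanCLM (B - A) y y, sq, ← mul_assoc]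
    refine (neg_le_neg ?_).trans (neg_le_of_abs_le (abs_real_inner_le_norm _ _))
    rw [mul_comm ‖y‖]
    exact mul_le_mul_of_nonneg_right (((Matrix.toEuclideanCLM (𝕜 := ℝ) (B - A)).le_opNorm y).trans
      (mul_le_mul_of_nonneg_right hB.le (norm_nonneg y))) (norm_nonneg y)
  rw [star_trivial, Matrix.add_mulVec, Matrix.smul_mulVec, Matrix.one_mulVec, dotProduct_add,
    dotProduct_smul, smul_eq_mul, ← neg_le_iff_add_nonneg]
  rwa [← dotProduct_self_eq_norm_sq] at hinner

theorem sub_smul_one_notMem (hF : IsSubequation F) {A : Matrix (Fin n) (Fin n) ℝ}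
    (hA : A ∈ symFrontier F) {ε : ℝ} (hε : 0 < ε) : A - ε • 1 ∉ F := fun hmem => by
  have hAF : A ∈ F := hF.2.1.closure_eq ▸ hA.1
  refine hA.2 ⟨_, eventually_posSemidef_sub_add_smul_one A (hF.1 A hAF) hε, fun B hB hBsymm => ?_⟩
  convert hF.2.2 _ hmem _ (hB hBsymm) using 1
  abel

theorem rieszMatrix_mem (hF : IsSubequation F) {p : ℝ} (hchar : HasRieszChar F p) {e : EucSp n}
    (he : ‖e‖ = 1) : rieszMatrix p e ∈ F :=
  hF.2.1.closure_eq ▸ (hchar.2 e he).1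

theorem IsPolarFrame.mul_sum_inner_sq_le (hF : IsSubequation F) {p : ℝ} (hchar : HasRieszChar F p)
    {ι : Type*} [Fintype ι] {w : ι → EucSp n} (hw : IsPolarFrame F w) {e : EucSp n}
    (he : ‖e‖ = 1) : p * ∑ k, inner ℝ e (w k) ^ 2 ≤ ∑ k, ‖w k‖ ^ 2 := by
  have := hw _ (rieszMatrix_mem hF hchar he)
  simp only [dotProduct_rieszMatrix_mulVec, Finset.sum_sub_distrib, ← Finset.mul_sum] at this
  linarith

theorem exists_isPolarFrame (hF : IsConeSubequation F) (hFconv : Convex ℝ F) {p : ℝ}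
    (hchar : HasRieszChar F p) {e : EucSp n} (he : ‖e‖ = 1) {ε : ℝ} (hε : 0 < ε) :
    ∃ w : Fin n → EucSp n, IsPolarFrame F w ∧
      (1 - ε) * ∑ k, ‖w k‖ ^ 2 < p * ∑ k, inner ℝ e (w k) ^ 2 := by
  have : LocallyConvexSpace ℝ (Matrix (Fin n) (Fin n) ℝ) :=
    inferInstanceAs (LocallyConvexSpace ℝ (Fin n → Fin n → ℝ))
  have hmem := rieszMatrix_mem hF.1 hchar he
  have h0 : (0 : Matrix (Fin n) (Fin n) ℝ) ∈ F := zero_smul ℝ (rieszMatrix p e) ▸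
    hF.2 _ hmem 0 le_rfl
  obtain ⟨f, hfF, hf⟩ := exists_clm_nonneg_and_neg hF.1.2.1 hFconv hF.2 h0
    (sub_smul_one_notMem hF.1 (hchar.2 e he) hε)
  obtain ⟨w, hw⟩ := exists_eq_sum_dotProduct_mulVec f.toLinearMap fun A hA =>
    hfF A (by simpa using hF.1.2.2 0 h0 A hA)
  refine ⟨w, fun A hA => (hfF A hA).trans_eq (hw A (hF.1.1 A hA)), ?_⟩
  change f (rieszMatrix p e - ε • 1) < 0 at hf
  have h1 := hw _ (hF.1.1 _ hmem)
  have h2 := hw 1 Matrix.isSymm_one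
  simp only [dotProduct_rieszMatrix_mulVec, Finset.sum_sub_distrib, ← Finset.mul_sum] at h1
  simp only [Matrix.one_mulVec, dotProduct_self_eq_norm_sq] at h2
  rw [map_sub, map_smul, smul_eq_mul] at hf
  simp only [ContinuousLinearMap.coe_coe] at h1 h2
  rw [h1, h2] at hf
  linarith

theorem HasRieszChar.le_dim (hn : 1 ≤ n) (hF : IsConeSubequation F) (hFconv : Convex ℝ F) {p : ℝ}
    (hchar : HasRieszChar F p) : p ≤ n := by
  set b := EuclideanSpace.basisFun (Fin n) ℝ
  have hle : ∀ {w : Fin n → EucSp n} (_ : IsPolarFrame F w) (i : Fin n),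
      p * ∑ k, inner ℝ (b i) (w k) ^ 2 ≤ ∑ k, ‖w k‖ ^ 2 := fun hw i =>
    hw.mul_sum_inner_sq_le hF.1 hchar (b.norm_eq_one i)
  obtain ⟨w, hw, hlt⟩ := exists_isPolarFrame hF hFconv hchar (b.norm_eq_one ⟨0, hn⟩) one_pos
  rw [sub_self, zero_mul] at hlt
  have hsum := Finset.sum_le_sum fun i (_ : i ∈ Finset.univ) => hle hw i
  rw [← Finset.mul_sum, Finset.sum_comm] at hsum
  simp only [b.sum_sq_inner_right, Finset.sum_const, Finset.card_univ, Fintype.card_fin,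
    nsmul_eq_mul] at hsum
  exact le_of_mul_le_mul_right hsum (hlt.trans_le (hle hw _))

end PolarFrame

section RadialComparison

variable {E ι : Type*} [NormedAddCommGroup E] [InnerProductSpace ℝ E] [Fintype ι]

theorem norm_add_smul_sq (y v : E) (s : ℝ) :
    ‖y + s • v‖ ^ 2 = ‖y‖ ^ 2 + 2 * s * inner ℝ y v + s ^ 2 * ‖v‖ ^ 2 := by
  rw [norm_add_sq_real, inner_smul_right, norm_smul, mul_pow, Real.norm_eq_abs, sq_abs, mul_assoc]

theorem hasDerivAt_norm_add_smul_sq (y v : E) (t : ℝ) :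
    HasDerivAt (fun s : ℝ => ‖y + s • v‖ ^ 2) (2 * inner ℝ y v + 2 * t * ‖v‖ ^ 2) t := by
  simp only [norm_add_smul_sq]
  have hlin := (((hasDerivAt_id t).const_mul 2).mul_const (inner ℝ y v)).const_add (‖y‖ ^ 2)
  refine (hlin.add ((hasDerivAt_pow 2 t).mul_const (‖v‖ ^ 2))).congr_deriv ?_
  push_cast
  ring

theorem hasSecondDerivAt_norm_add_smul_sq (y v : E) :
    HasSecondDerivAt (fun s : ℝ => ‖y + s • v‖ ^ 2) (2 * ‖v‖ ^ 2) 0 := by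
  refine ⟨_, .of_forall (hasDerivAt_norm_add_smul_sq y v), ?_⟩
  simpa using (((hasDerivAt_id (0 : ℝ)).const_mul 2).mul_const (‖v‖ ^ 2)).const_add
    (2 * inner ℝ y v)

theorem norm_rpow_eq_sq_rpow {V : Type*} [SeminormedAddCommGroup V] (y : V) (a : ℝ) :
    ‖y‖ ^ a = (‖y‖ ^ 2) ^ (a / 2) := by
  rw [← Real.rpow_natCast, ← Real.rpow_mul (norm_nonneg y)]
  congr 1
  push_cast
  ring

theorem hasSecondDerivAt_norm_add_smul_rpow {y : E} (hy : y ≠ 0) (a : ℝ) (v : E) :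
    HasSecondDerivAt (fun s : ℝ => ‖y + s • v‖ ^ a)
      (a * ‖y‖ ^ (a - 2) * (‖v‖ ^ 2 - (2 - a) * inner ℝ (‖y‖⁻¹ • y) v ^ 2)) 0 := by
  have hy0 : 0 < ‖y‖ := norm_pos_iff.2 hy
  have hpos : ∀ᶠ s : ℝ in 𝓝 0, 0 < ‖y + s • v‖ ^ 2 :=
    (hasDerivAt_norm_add_smul_sq y v 0).continuousAt.eventually (lt_mem_nhds (by
      simpa only [zero_smul, add_zero] using pow_pos hy0 2))
  simp only [fun s : ℝ => norm_rpow_eq_sq_rpow (y + s • v) a]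
  refine ⟨_, hpos.mono fun s hs => (hasDerivAt_norm_add_smul_sq y v s).rpow_const (.inl hs.ne'), ?_⟩
  have hlin : HasDerivAt (fun s : ℝ => (2 * inner ℝ y v + 2 * s * ‖v‖ ^ 2) * (a / 2))
      (2 * ‖v‖ ^ 2 * (a / 2)) 0 := by
    simpa using ((((hasDerivAt_id (0 : ℝ)).const_mul 2).mul_const (‖v‖ ^ 2)).const_add
      (2 * inner ℝ y v)).mul_const (a / 2)
  have hpow := (hasDerivAt_norm_add_smul_sq y v 0).rpow_const (p := a / 2 - 1)
    (.inl hpos.self_of_nhds.ne')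
  refine (hlin.mul hpow).congr_deriv ?_
  have hexp : (‖y‖ ^ 2) ^ (a / 2 - 1) = ‖y‖ ^ (a - 2) := by
    rw [norm_rpow_eq_sq_rpow y (a - 2), sub_div, div_self two_ne_zero]
  simp only [zero_smul, add_zero]
  rw [Real.rpow_sub_one (by positivity) (a / 2 - 1), hexp, inner_smul_left, conj_trivial]
  field_simp
  ring

/-- The relation between a family `𝒲` of frames and the Riesz characteristic `p` that makes
`‖·‖ ^ (2 - p)` extremal among radial functions: the quadratic form `‖v‖² - p ⟪e, v⟫²` has
nonnegative sum over each frame in `𝒲`, arbitrarily small relative to `∑ ‖w k‖²`. -/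
def HasFrameChar (𝒲 : Set (ι → E)) (p : ℝ) : Prop :=
  ∀ e : E, ‖e‖ = 1 → (∀ w ∈ 𝒲, 0 ≤ ∑ k, (‖w k‖ ^ 2 - p * inner ℝ e (w k) ^ 2)) ∧
    ∀ ε > 0, ∃ w ∈ 𝒲, ∑ k, (‖w k‖ ^ 2 - p * inner ℝ e (w k) ^ 2) < ε * ∑ k, ‖w k‖ ^ 2

/-- At every point of `U`, the second derivatives of `W` along the vectors of each frame in `𝒲`
exist and have nonnegative sum. -/
def IsFrameSubharmonicOn (𝒲 : Set (ι → E)) (U : Set E) (W : E → ℝ) : Prop :=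
  ∀ y ∈ U, ∀ w ∈ 𝒲, ∃ m : ι → ℝ, (∀ k, HasSecondDerivAt (fun s => W (y + s • w k)) (m k) 0) ∧
    0 ≤ ∑ k, m k

variable {𝒲 : Set (ι → E)} {p : ℝ}

theorem HasFrameChar.exists_pos (h𝒲 : HasFrameChar 𝒲 p) {e : E} (he : ‖e‖ = 1) (c : ℝ) {δ : ℝ}
    (hδ : 0 < δ) : ∃ w ∈ 𝒲,
      0 < c * ∑ k, (‖w k‖ ^ 2 - p * inner ℝ e (w k) ^ 2) + δ * ∑ k, ‖w k‖ ^ 2 := by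
  obtain ⟨w, hw, hlt⟩ := (h𝒲 e he).2 (δ / (|c| + 1)) (by positivity)
  refine ⟨w, hw, ?_⟩
  have hQ := (h𝒲 e he).1 w hw
  set Q := ∑ k, (‖w k‖ ^ 2 - p * inner ℝ e (w k) ^ 2)
  rw [div_mul_eq_mul_div, lt_div_iff₀ (by positivity)] at hlt
  nlinarith [neg_abs_le c]

theorem IsFrameSubharmonicOn.not_isLocalMax (h𝒲 : HasFrameChar 𝒲 p) {U : Set E} {W : E → ℝ}
    (hW : IsFrameSubharmonicOn 𝒲 U W) {y : E} (hyU : y ∈ U) (hy : y ≠ 0) (β : ℝ) {δ : ℝ}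
    (hδ : 0 < δ) : ¬IsLocalMax (fun z => W z + β * ‖z‖ ^ (2 - p) + δ * ‖z‖ ^ 2) y := fun hmax => by
  have he : ‖‖y‖⁻¹ • y‖ = 1 := norm_smul_inv_norm hy
  obtain ⟨w, hw, hpos⟩ := h𝒲.exists_pos he (β * ((2 - p) * ‖y‖ ^ (2 - p - 2)))
    (mul_pos two_pos hδ)
  obtain ⟨m, hm, hm0⟩ := hW y hyU w hw
  have hsecond : ∀ k, m k + β * ((2 - p) * ‖y‖ ^ (2 - p - 2) *
      (‖w k‖ ^ 2 - p * inner ℝ (‖y‖⁻¹ • y) (w k) ^ 2)) + δ * (2 * ‖w k‖ ^ 2) ≤ 0 := fun k => by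
    have hrpow := hasSecondDerivAt_norm_add_smul_rpow hy (2 - p) (w k)
    rw [sub_sub_cancel] at hrpow
    exact ((hm k).add (hrpow.const_mul β) |>.add
      ((hasSecondDerivAt_norm_add_smul_sq y (w k)).const_mul δ)).nonpos_of_isLocalMax
        (isLocalMax_comp_add_smul hmax (w k))
  have hsum := Finset.sum_nonpos fun k (_ : k ∈ Finset.univ) => hsecond k
  simp only [Finset.sum_add_distrib, ← Finset.mul_sum] at hsum
  linarith

variable [FiniteDimensional ℝ E]

theorem IsFrameSubharmonicOn.add_rpow_le_add_sq (h𝒲 : HasFrameChar 𝒲 p) {W : E → ℝ} {a b : ℝ}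
    (ha : 0 < a) (hWc : ContinuousOn W {y | a ≤ ‖y‖ ∧ ‖y‖ ≤ b})
    (hW : IsFrameSubharmonicOn 𝒲 {y | a < ‖y‖ ∧ ‖y‖ < b} W) {α β : ℝ}
    (hbd : ∀ y, ‖y‖ = a ∨ ‖y‖ = b → W y + β * ‖y‖ ^ (2 - p) ≤ α) {δ : ℝ} (hδ : 0 < δ) {y : E}
    (hay : a ≤ ‖y‖) (hyb : ‖y‖ ≤ b) : W y + β * ‖y‖ ^ (2 - p) ≤ α + δ * b ^ 2 := by
  set D : Set E := {y | a ≤ ‖y‖ ∧ ‖y‖ ≤ b}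
  have hD : IsCompact D := (isCompact_closedBall (0 : E) b).of_isClosed_subset
    ((isClosed_le continuous_const continuous_norm).inter
      (isClosed_le continuous_norm continuous_const)) fun z hz => by simpa using hz.2
  have hcont : ContinuousOn (fun z => W z + β * ‖z‖ ^ (2 - p) + δ * ‖z‖ ^ 2) D :=
    (hWc.add (continuousOn_const.mul (continuous_norm.continuousOn.rpow_const fun z hz =>
      .inl (ha.trans_le hz.1).ne'))).add (by fun_prop)
  obtain ⟨z, hz, hmax⟩ := hD.exists_isMaxOn ⟨y, hay, hyb⟩ hcont
  have hz0 : z ≠ 0 := norm_pos_iff.1 (ha.trans_le hz.1)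
  have hzbd : ‖z‖ = a ∨ ‖z‖ = b := by
    by_contra! hne
    have hza : a < ‖z‖ := hz.1.lt_of_ne' hne.1
    have hzb : ‖z‖ < b := hz.2.lt_of_ne hne.2
    refine hW.not_isLocalMax h𝒲 ⟨hza, hzb⟩ hz0 β hδ (hmax.isLocalMax ?_)
    filter_upwards [continuous_norm.continuousAt.eventually (lt_mem_nhds hza),
      continuous_norm.continuousAt.eventually (gt_mem_nhds hzb)] with x hx₁ hx₂
    exact ⟨hx₁.le, hx₂.le⟩
  have hyz : W y + β * ‖y‖ ^ (2 - p) + δ * ‖y‖ ^ 2 ≤ W z + β * ‖z‖ ^ (2 - p) + δ * ‖z‖ ^ 2 :=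
    hmax ⟨hay, hyb⟩
  calc W y + β * ‖y‖ ^ (2 - p) ≤ W z + β * ‖z‖ ^ (2 - p) + δ * ‖z‖ ^ 2 :=
        (le_add_of_nonneg_right (by positivity)).trans hyz
    _ ≤ α + δ * b ^ 2 := by
        gcongr
        exacts [hbd z hzbd, hz.2]

theorem IsFrameSubharmonicOn.add_rpow_le (h𝒲 : HasFrameChar 𝒲 p) {W : E → ℝ} {a b : ℝ}
    (ha : 0 < a) (hWc : ContinuousOn W {y | a ≤ ‖y‖ ∧ ‖y‖ ≤ b})
    (hW : IsFrameSubharmonicOn 𝒲 {y | a < ‖y‖ ∧ ‖y‖ < b} W) {α β : ℝ}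
    (hbd : ∀ y, ‖y‖ = a ∨ ‖y‖ = b → W y + β * ‖y‖ ^ (2 - p) ≤ α) {y : E}
    (hay : a ≤ ‖y‖) (hyb : ‖y‖ ≤ b) : W y + β * ‖y‖ ^ (2 - p) ≤ α := by
  have hlim : Tendsto (fun δ : ℝ => α + δ * b ^ 2) (𝓝[>] 0) (𝓝 α) := by
    have : ContinuousAt (fun δ : ℝ => α + δ * b ^ 2) 0 := by fun_prop
    simpa using this.tendsto.mono_left nhdsWithin_le_nhds
  exact ge_of_tendsto hlim (eventually_mem_nhdsWithin.mono fun δ hδ =>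
    hW.add_rpow_le_add_sq h𝒲 ha hWc hbd hδ hay hyb)

theorem IsFrameSubharmonicOn.three_spheres (hp : 2 < p) (h𝒲 : HasFrameChar 𝒲 p) {W : E → ℝ}
    {R : ℝ} (hWc : Continuous W) (hW : IsFrameSubharmonicOn 𝒲 (Metric.ball 0 R) W)
    (hWrad : ∀ x y, ‖x‖ = ‖y‖ → W x = W y) {y₁ y y₂ : E} (hy₁ : y₁ ≠ 0) (h₁ : ‖y₁‖ ≤ ‖y‖)
    (h₂ : ‖y‖ ≤ ‖y₂‖) (hlt : ‖y₁‖ < ‖y₂‖) (hR : ‖y₂‖ ≤ R) :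
    (‖y₁‖ ^ (2 - p) - ‖y₂‖ ^ (2 - p)) * W y ≤ (‖y‖ ^ (2 - p) - ‖y₂‖ ^ (2 - p)) * W y₁ +
      (‖y₁‖ ^ (2 - p) - ‖y‖ ^ (2 - p)) * W y₂ := by
  have hy₁0 : 0 < ‖y₁‖ := norm_pos_iff.2 hy₁
  have hpos : 0 < ‖y₁‖ ^ (2 - p) - ‖y₂‖ ^ (2 - p) :=
    sub_pos.2 (Real.rpow_lt_rpow_of_neg hy₁0 hlt (by linarith))
  -- `β` is chosen so that `W + β ‖·‖ ^ (2 - p)` takes the same value on both bounding spheres.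
  obtain ⟨β, hβ⟩ : ∃ β, β * (‖y₁‖ ^ (2 - p) - ‖y₂‖ ^ (2 - p)) = W y₂ - W y₁ :=
    ⟨_, div_mul_cancel₀ _ hpos.ne'⟩
  have hmain : W y + β * ‖y‖ ^ (2 - p) ≤ W y₁ + β * ‖y₁‖ ^ (2 - p) := by
    refine IsFrameSubharmonicOn.add_rpow_le h𝒲 hy₁0 hWc.continuousOn
      (fun z hz => hW z (by simpa using hz.2.trans_le hR)) (fun z hz => ?_) h₁ h₂
    rcases hz with hz | hz
    · rw [hWrad z _ hz, hz]
    · rw [hWrad z _ hz, hz]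
      linarith
  linear_combination (‖y₁‖ ^ (2 - p) - ‖y₂‖ ^ (2 - p)) * hmain +
    (‖y₁‖ ^ (2 - p) - ‖y‖ ^ (2 - p)) * hβ

theorem norm_rpow_inv_smul_rpow {V : Type*} [NormedAddCommGroup V] [NormedSpace ℝ V] {q s : ℝ}
    (hq : q ≠ 0) (hs : 0 ≤ s) (y : V) : ‖s ^ q⁻¹ • y‖ ^ q = s * ‖y‖ ^ q := by
  rw [norm_smul, Real.norm_of_nonneg (Real.rpow_nonneg hs _),
    Real.mul_rpow (Real.rpow_nonneg hs _) (norm_nonneg y), Real.rpow_inv_rpow hs hq]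

theorem IsFrameSubharmonicOn.convexOn_radial (hp : 2 < p) (h𝒲 : HasFrameChar 𝒲 p) {W : E → ℝ}
    {R : ℝ} (hR : 0 < R) (hWc : Continuous W) (hW : IsFrameSubharmonicOn 𝒲 (Metric.ball 0 R) W)
    (hWrad : ∀ x y, ‖x‖ = ‖y‖ → W x = W y) {y : E} (hy1 : ‖y‖ ≤ 1) :
    ConvexOn ℝ (Ici (R ^ (2 - p))) fun s => W (s ^ (2 - p)⁻¹ • y) := by
  obtain rfl | hy0 := eq_or_ne y 0
  · simpa only [smul_zero] using convexOn_const _ (convex_Ici _)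
  have hp0 : 2 - p < 0 := by linarith
  have hinv : (2 - p)⁻¹ < 0 := inv_neg''.2 hp0
  have hRpos : 0 < R ^ (2 - p) := Real.rpow_pos_of_pos hR _
  have hy : 0 < ‖y‖ := norm_pos_iff.2 hy0
  have hnorm : ∀ {s : ℝ}, 0 < s → ‖s ^ (2 - p)⁻¹ • y‖ = s ^ (2 - p)⁻¹ * ‖y‖ := fun hs => by
    rw [norm_smul, Real.norm_of_nonneg (Real.rpow_nonneg hs.le _)]
  have hanti : ∀ {a b : ℝ}, 0 < a → a < b → ‖b ^ (2 - p)⁻¹ • y‖ < ‖a ^ (2 - p)⁻¹ • y‖ :=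
    fun ha hab => by
      rw [hnorm ha, hnorm (ha.trans hab)]
      exact mul_lt_mul_of_pos_right (Real.rpow_lt_rpow_of_neg ha hab hinv) hy
  refine LinearOrder.convexOn_of_lt (convex_Ici _) fun s₁ hs₁ s₂ _ hlt l₁ l₂ hl₁ hl₂ hl => ?_
  have hs₁0 : 0 < s₁ := hRpos.trans_le hs₁
  have hs₂0 : 0 < s₂ := hs₁0.trans hlt
  set s := l₁ • s₁ + l₂ • s₂ with hs
  simp only [smul_eq_mul] at hs ⊢
  have hss₁ : s₁ < s := by nlinarith
  have hss₂ : s < s₂ := by nlinarith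
  have hle : ‖s₁ ^ (2 - p)⁻¹ • y‖ ≤ R := by
    rw [hnorm hs₁0]
    calc s₁ ^ (2 - p)⁻¹ * ‖y‖ ≤ (R ^ (2 - p)) ^ (2 - p)⁻¹ * 1 :=
          mul_le_mul (Real.rpow_le_rpow_of_nonpos hRpos hs₁ hinv.le) hy1 hy.le (by positivity)
      _ = R := by rw [mul_one, Real.rpow_rpow_inv hR.le hp0.ne]
  have hthree := hW.three_spheres hp h𝒲 hWc hWrad
    (smul_ne_zero (Real.rpow_pos_of_pos hs₂0 _).ne' hy0)
    (hanti (hs₁0.trans hss₁) hss₂).le (hanti hs₁0 hss₁).le (hanti hs₁0 hlt) hle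
  rw [norm_rpow_inv_smul_rpow hp0.ne hs₁0.le, norm_rpow_inv_smul_rpow hp0.ne hs₂0.le,
    norm_rpow_inv_smul_rpow hp0.ne (hs₁0.trans hss₁).le] at hthree
  refine le_of_mul_le_mul_left ?_ (mul_pos (sub_pos.2 hlt) (Real.rpow_pos_of_pos hy (2 - p)))
  obtain rfl : l₁ = 1 - l₂ := by linarith
  rw [hs] at hthree ⊢
  linear_combination hthree

end RadialComparison

section WeaklyFrameSubharmonic

variable {E E' F ι : Type*} [NormedAddCommGroup E] [InnerProductSpace ℝ E]
  [NormedAddCommGroup E'] [InnerProductSpace ℝ E'] [NormedAddCommGroup F] [NormedSpace ℝ F]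
  [Fintype ι]

theorem lineDerivOp_compSubConstCLM (v a : E) (f : 𝓢(E, F)) :
    ∂_{v} (f.compSubConstCLM ℝ a) = (∂_{v} f).compSubConstCLM ℝ a := by
  ext x
  simp only [SchwartzMap.lineDerivOp_apply_eq_fderiv, SchwartzMap.compSubConstCLM_apply]
  exact congrArg (· v) (fderiv_comp_sub (𝕜 := ℝ) (f := f) (x := x) a)

theorem frameLaplacian_compSubConstCLM (w : ι → E) (a : E) (f : 𝓢(E, F)) :
    frameLaplacian w (f.compSubConstCLM ℝ a) = (frameLaplacian w f).compSubConstCLM ℝ a := by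
  simp only [frameLaplacian_eq_sum, lineDerivOp_compSubConstCLM, map_sum]

theorem frameLaplacian_compCLMOfContinuousLinearEquiv (w : ι → E) (e : E ≃L[ℝ] E')
    (f : 𝓢(E', F)) :
    frameLaplacian w (SchwartzMap.compCLMOfContinuousLinearEquiv ℝ e f) =
      SchwartzMap.compCLMOfContinuousLinearEquiv ℝ e (frameLaplacian (e ∘ w) f) := by
  simp only [frameLaplacian_eq_sum, SchwartzMap.lineDerivOp_compCLMOfContinuousLinearEquiv, map_sum,
    Function.comp_apply]

theorem tsupport_compSubConstCLM (a : E) (f : 𝓢(E, F)) :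
    tsupport (f.compSubConstCLM ℝ a) = (· - a) ⁻¹' tsupport f :=
  tsupport_comp_eq_preimage f (Homeomorph.subRight a)

variable [FiniteDimensional ℝ E] [MeasurableSpace E] [BorelSpace E]

/-- `f` satisfies `∑ k, ∂_{w k} ∂_{w k} f ≥ 0` on `U` in the sense of distributions for each frame
`w` in `𝒲`. -/
def IsWeaklyFrameSubharmonicOn (𝒲 : Set (ι → E)) (U : Set E) (f : E → ℝ) : Prop :=
  ∀ w ∈ 𝒲, ∀ η : 𝓢(E, ℝ), (∀ x, 0 ≤ η x) → HasCompactSupport η → tsupport η ⊆ U →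
    0 ≤ ∫ x, f x * frameLaplacian w η x

variable {𝒲 : Set (ι → E)} {U V : Set E} {f g : E → ℝ}

theorem IsWeaklyFrameSubharmonicOn.mono (hf : IsWeaklyFrameSubharmonicOn 𝒲 U f) (hVU : V ⊆ U) :
    IsWeaklyFrameSubharmonicOn 𝒲 V f :=
  fun w hw η hη hηc hηV => hf w hw η hη hηc (hηV.trans hVU)

theorem IsWeaklyFrameSubharmonicOn.congr (hf : IsWeaklyFrameSubharmonicOn 𝒲 U f)
    (hfg : EqOn f g U) : IsWeaklyFrameSubharmonicOn 𝒲 U g := fun w hw η hη hηc hηU => by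
  convert hf w hw η hη hηc hηU using 3 with x
  by_cases hx : x ∈ U
  · rw [hfg hx]
  · rw [image_eq_zero_of_notMem_tsupport fun h =>
      hx (hηU (tsupport_frameLaplacian_subset w η h)), mul_zero, mul_zero]

theorem IsWeaklyFrameSubharmonicOn.comp_const_add (hf : IsWeaklyFrameSubharmonicOn 𝒲 U f) (a : E) :
    IsWeaklyFrameSubharmonicOn 𝒲 ((a + ·) ⁻¹' U) fun x => f (a + x) :=
  fun w hw η hη hηc hηU => by
    have hsupp := tsupport_compSubConstCLM a η
    have hmain := hf w hw (η.compSubConstCLM ℝ a) (fun x => hη (x - a))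
      (hηc.comp_homeomorph (Homeomorph.subRight a)) (hsupp.trans_subset fun x hx => by
        simpa using hηU hx)
    rw [← integral_add_left_eq_self _ a] at hmain
    simpa [frameLaplacian_compSubConstCLM] using hmain

end WeaklyFrameSubharmonic

section OrbitAverage

theorem setIntegral_eq_integral_mul_indicator_one {α : Type*} [MeasurableSpace α] {μ : Measure α}
    {s : Set α} (hs : MeasurableSet s) (f : α → ℝ) :
    ∫ x in s, f x ∂μ = ∫ x, f x * s.indicator 1 x ∂μ := by
  classical
  rw [← integral_indicator hs]
  simp [Set.indicator_apply]

variable {E H : Type*} [NormedAddCommGroup E] [InnerProductSpace ℝ E] [Group H]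
  [MeasurableSpace H]

/-- The average of `f` over the orbits of the isometric action `ρ` of a group with a probability
measure `μ`, meant for the Haar measure of a compact group. -/
def orbitAvg (μ : Measure H) (ρ : H →* (E ≃ₗᵢ[ℝ] E)) (f : E → ℝ) (x : E) : ℝ :=
  ∫ g, f (ρ g⁻¹ x) ∂μ

variable {μ : Measure H} {ρ : H →* (E ≃ₗᵢ[ℝ] E)} {f : E → ℝ}

theorem orbitAvg_map [MeasurableMul H] [μ.IsMulLeftInvariant] (ρ : H →* (E ≃ₗᵢ[ℝ] E)) (f : E → ℝ)
    (h : H) (x : E) : orbitAvg μ ρ f (ρ h x) = orbitAvg μ ρ f x := by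
  rw [orbitAvg, ← integral_mul_left_eq_self _ h]
  simp [orbitAvg]

theorem orbitAvg_eq_of_norm_eq [MeasurableMul H] [μ.IsMulLeftInvariant]
    (hρ : ∀ x y, ‖x‖ = ‖y‖ → ∃ h, ρ h x = y) (f : E → ℝ) {x y : E} (hxy : ‖x‖ = ‖y‖) :
    orbitAvg μ ρ f x = orbitAvg μ ρ f y := by
  obtain ⟨h, rfl⟩ := hρ x y hxy
  exact (orbitAvg_map ρ f h x).symm

variable [FiniteDimensional ℝ E] [MeasurableSpace E] [BorelSpace E] [TopologicalSpace H]
  [IsTopologicalGroup H] [BorelSpace H] [IsProbabilityMeasure μ]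

theorem integrable_comp_map_inv (hρ : Continuous fun q : H × E => ρ q.1 q.2)
    (hf : Integrable f) : Integrable (fun q : H × E => f (ρ q.1⁻¹ q.2)) (μ.prod volume) := by
  have hmeas : Measurable fun q : H × E => ρ q.1⁻¹ q.2 :=
    (hρ.comp (continuous_fst.inv.prodMk continuous_snd)).measurable
  exact ((MeasurePreserving.id μ).skew_product hmeas
    (.of_forall fun g => (ρ g⁻¹).measurePreserving.map_eq)).integrable_comp_of_integrable
      (hf.comp_snd μ)

theorem integrable_orbitAvg (hρ : Continuous fun q : H × E => ρ q.1 q.2) (hf : Integrable f) :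
    Integrable (orbitAvg μ ρ f) :=
  (integrable_comp_map_inv hρ hf).integral_prod_right

theorem integral_orbitAvg_mul (hρ : Continuous fun q : H × E => ρ q.1 q.2) (hf : Integrable f)
    {φ : E → ℝ} (hφ : Measurable φ) {C : ℝ} (hC : ∀ x, ‖φ x‖ ≤ C) :
    ∫ x, orbitAvg μ ρ f x * φ x = ∫ g, (∫ x, f x * φ (ρ g x)) ∂μ := by
  have hint : Integrable (fun q : H × E => f (ρ q.1⁻¹ q.2) * φ q.2) (μ.prod volume) :=
    (integrable_comp_map_inv hρ hf).mul_bdd (hφ.comp measurable_snd).aestronglyMeasurable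
      (.of_forall fun q => hC q.2)
  calc ∫ x, orbitAvg μ ρ f x * φ x = ∫ x, (∫ g, f (ρ g⁻¹ x) * φ x ∂μ) := by
        simp only [orbitAvg, integral_mul_const]
    _ = ∫ g, (∫ x, f (ρ g⁻¹ x) * φ x) ∂μ := (integral_integral_swap hint).symm
    _ = ∫ g, (∫ x, f x * φ (ρ g x)) ∂μ := by
        congr! 2 with g
        rw [← (ρ g).measurePreserving.integral_comp (ρ g).toHomeomorph.measurableEmbedding]
        simp

theorem setIntegral_closedBall_orbitAvg (hρ : Continuous fun q : H × E => ρ q.1 q.2)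
    (hf : Integrable f) (r : ℝ) :
    ∫ x in Metric.closedBall 0 r, orbitAvg μ ρ f x = ∫ x in Metric.closedBall 0 r, f x := by
  classical
  have hbound : ∀ x, ‖(Metric.closedBall (0 : E) r).indicator (1 : E → ℝ) x‖ ≤ 1 := fun x =>
    (norm_indicator_le_norm_self _ _).trans_eq norm_one
  have hinv : ∀ g x, (Metric.closedBall (0 : E) r).indicator (1 : E → ℝ) (ρ g x) =
      (Metric.closedBall 0 r).indicator 1 x := fun g x => by
    rw [indicator_apply, indicator_apply]
    simp
  rw [setIntegral_eq_integral_mul_indicator_one measurableSet_closedBall, integral_orbitAvg_mul hρ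
    hf (measurable_one.indicator measurableSet_closedBall) hbound]
  simp [hinv, setIntegral_eq_integral_mul_indicator_one measurableSet_closedBall]

theorem IsWeaklyFrameSubharmonicOn.orbitAvg {ι : Type*} [Fintype ι] {𝒲 : Set (ι → E)} {R : ℝ}
    (hρ : Continuous fun q : H × E => ρ q.1 q.2) (h𝒲 : ∀ h, ∀ w ∈ 𝒲, ρ h ∘ w ∈ 𝒲)
    (hf : Integrable f) (hfsub : IsWeaklyFrameSubharmonicOn 𝒲 (Metric.ball 0 R) f) :
    IsWeaklyFrameSubharmonicOn 𝒲 (Metric.ball 0 R) (orbitAvg μ ρ f) := fun w hw η hη hηc hηR => by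
  rw [integral_orbitAvg_mul hρ hf (frameLaplacian w η).continuous.measurable
    ((frameLaplacian w η).norm_le_seminorm ℝ)]
  refine integral_nonneg fun g => ?_
  let e : E ≃L[ℝ] E := (ρ g).toContinuousLinearEquiv
  have hcancel : e ∘ ρ g⁻¹ ∘ w = w := by
    ext k
    simp [e]
  have hcomp := frameLaplacian_compCLMOfContinuousLinearEquiv (ρ g⁻¹ ∘ w) e η
  rw [hcancel] at hcomp
  have hsupp : tsupport (SchwartzMap.compCLMOfContinuousLinearEquiv ℝ e η) = e ⁻¹' tsupport η :=
    tsupport_comp_eq_preimage η e.toHomeomorph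
  have hmain := hfsub _ (h𝒲 g⁻¹ w hw) (SchwartzMap.compCLMOfContinuousLinearEquiv ℝ e η)
    (fun x => hη (e x)) (hηc.comp_homeomorph e.toHomeomorph) (hsupp.trans_subset fun x hx => by
      simpa [e] using hηR hx)
  rwa [hcomp] at hmain

theorem IsWeaklyFrameSubharmonicOn.exists_radial_average {K : Type*} [Group K]
    [TopologicalSpace K] [IsTopologicalGroup K] [CompactSpace K] {ρ : K →* (E ≃ₗᵢ[ℝ] E)}
    {ι : Type*} [Fintype ι] {𝒲 : Set (ι → E)} {R : ℝ}
    (hfsub : IsWeaklyFrameSubharmonicOn 𝒲 (Metric.ball 0 R) f)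
    (hρ : Continuous fun q : K × E => ρ q.1 q.2) (hρtrans : ∀ x y, ‖x‖ = ‖y‖ → ∃ h, ρ h x = y)
    (h𝒲 : ∀ h, ∀ w ∈ 𝒲, ρ h ∘ w ∈ 𝒲) (hf : Integrable f) :
    ∃ f' : E → ℝ, Integrable f' ∧ (∀ x y, ‖x‖ = ‖y‖ → f' x = f' y) ∧
      IsWeaklyFrameSubharmonicOn 𝒲 (Metric.ball 0 R) f' ∧
      ∀ r, ∫ x in Metric.closedBall 0 r, f' x = ∫ x in Metric.closedBall 0 r, f x := by
  let _ : MeasurableSpace K := borel K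
  have : BorelSpace K := ⟨rfl⟩
  let μ : Measure K := Measure.haarMeasure ⊤
  have : IsProbabilityMeasure μ := ⟨Measure.haarMeasure_self (K₀ := ⊤)⟩
  exact ⟨_root_.orbitAvg μ ρ f, integrable_orbitAvg hρ hf,
    fun x y => orbitAvg_eq_of_norm_eq hρtrans f, hfsub.orbitAvg hρ h𝒲 hf,
    setIntegral_closedBall_orbitAvg hρ hf⟩

end OrbitAverage

section STInvariant

variable {n : ℕ} {F : Set (Matrix (Fin n) (Fin n) ℝ)}

theorem compactSpace_orthogonalGroup (n : ℕ) : CompactSpace (Matrix.orthogonalGroup (Fin n) ℝ) := by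
  have hbox : IsCompact (Set.univ.pi fun _ : Fin n => Set.univ.pi fun _ : Fin n =>
      Icc (-1 : ℝ) 1) := isCompact_univ_pi fun _ => isCompact_univ_pi fun _ => isCompact_Icc
  refine isCompact_iff_compactSpace.1 (hbox.of_isClosed_subset
    (isClosed_unitary (R := Matrix (Fin n) (Fin n) ℝ)) ?_)
  exact fun A hA i _ j _ => abs_le.1 (entry_norm_bound_of_unitary hA i j)

/-- The action of the orthogonal group on Euclidean space. -/
def orthogonalAction (n : ℕ) :
    Matrix.orthogonalGroup (Fin n) ℝ →* (EucSp n ≃ₗᵢ[ℝ] EucSp n) :=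
  Unitary.linearIsometryEquiv.toMonoidHom.comp
    { toFun := Subtype.map (Matrix.toEuclideanCLM (n := Fin n) (𝕜 := ℝ)) fun _ => Unitary.map_mem _
      map_one' := Subtype.ext (map_one _)
      map_mul' := fun _ _ => Subtype.ext (map_mul _ _ _) }

theorem continuous_orthogonalAction {X : Type*} [TopologicalSpace X]
    {g : X → Matrix.orthogonalGroup (Fin n) ℝ} {f : X → EucSp n} (hg : Continuous g)
    (hf : Continuous f) : Continuous fun x => orthogonalAction n (g x) (f x) :=
  (PiLp.continuous_toLp 2 _).comp ((continuous_subtype_val.comp hg).matrix_mulVec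
    ((PiLp.continuous_ofLp 2 _).comp hf))

theorem STInvariant.exists_subgroup (hST : STInvariant F) :
    ∃ H : Subgroup (Matrix.orthogonalGroup (Fin n) ℝ),
      IsClosed (H : Set (Matrix.orthogonalGroup (Fin n) ℝ)) ∧
      (∀ x y : EucSp n, ‖x‖ = ‖y‖ → ∃ h ∈ H, orthogonalAction n h x = y) ∧
      ∀ h ∈ H, ∀ A ∈ F, (h.1)ᵀ * A * h.1 ∈ F := by
  obtain ⟨G, hGc, hGO, hG1, hGmul, hGinv, htrans, hGF⟩ := hST
  let H : Subgroup (Matrix.orthogonalGroup (Fin n) ℝ) :=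
    { carrier := {g | g.1 ∈ G}
      mul_mem' := fun ha hb => hGmul _ ha _ hb
      one_mem' := hG1
      inv_mem' := fun {g} hg => by
        have hinv : (g.1)⁻¹ = (g⁻¹).1 :=
          Matrix.inv_eq_left_inv (congrArg Subtype.val (inv_mul_cancel g))
        exact (congrArg (· ∈ G) hinv).mp (hGinv _ hg) }
  refine ⟨H, hGc.preimage continuous_subtype_val, fun x y hxy => ?_, fun h hh => hGF _ hh⟩
  obtain rfl | hx := eq_or_ne x 0
  · exact ⟨1, H.one_mem, by simpa using (norm_eq_zero.1 (hxy.symm.trans norm_zero)).symm⟩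
  have hx0 : ‖x‖⁻¹ ≠ 0 := inv_ne_zero (norm_ne_zero_iff.2 hx)
  have hy : y ≠ 0 := norm_ne_zero_iff.1 (hxy ▸ norm_ne_zero_iff.2 hx)
  obtain ⟨g, hg, hgx⟩ := htrans (‖x‖⁻¹ • x) (‖x‖⁻¹ • y) (norm_smul_inv_norm hx)
    (hxy ▸ norm_smul_inv_norm hy)
  rw [map_smul] at hgx
  exact ⟨⟨g, hGO hg⟩, hg, smul_right_injective _ hx0 hgx⟩

theorem IsPolarFrame.orthogonalAction_comp {ι : Type*} [Fintype ι] {w : ι → EucSp n}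
    (hw : IsPolarFrame F w) {g : Matrix.orthogonalGroup (Fin n) ℝ}
    (hg : ∀ A ∈ F, (g.1)ᵀ * A * g.1 ∈ F) : IsPolarFrame F (orthogonalAction n g ∘ w) :=
  hw.map_toEuclideanCLM hg

theorem STInvariant.exists_radial_average (hST : STInvariant F) {f : EucSp n → ℝ}
    (hf : Integrable f) {ι : Type*} [Fintype ι] {R : ℝ}
    (hfsub : IsWeaklyFrameSubharmonicOn {w : ι → EucSp n | IsPolarFrame F w} (Metric.ball 0 R) f) :
    ∃ f' : EucSp n → ℝ, Integrable f' ∧ (∀ x y, ‖x‖ = ‖y‖ → f' x = f' y) ∧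
      IsWeaklyFrameSubharmonicOn {w : ι → EucSp n | IsPolarFrame F w} (Metric.ball 0 R) f' ∧
      ∀ r, ∫ x in Metric.closedBall 0 r, f' x = ∫ x in Metric.closedBall 0 r, f x := by
  obtain ⟨H, hHc, htrans, hHF⟩ := hST.exists_subgroup
  have := compactSpace_orthogonalGroup n
  have : CompactSpace H := isCompact_iff_compactSpace.1 hHc.isCompact
  have hρ : Continuous fun q : H × EucSp n => orthogonalAction n q.1 q.2 :=
    continuous_orthogonalAction (continuous_subtype_val.comp continuous_fst) continuous_snd
  refine hfsub.exists_radial_average (ρ := (orthogonalAction n).comp H.subtype) hρ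
    (fun x y hxy => ?_) (fun h w hw => hw.orthogonalAction_comp (hHF h h.2)) hf
  obtain ⟨h, hh, hhx⟩ := htrans x y hxy
  exact ⟨⟨h, hh⟩, hhx⟩

end STInvariant

section Mollification

variable {E ι : Type*} [NormedAddCommGroup E] [InnerProductSpace ℝ E] [FiniteDimensional ℝ E]
  [MeasurableSpace E] [BorelSpace E]

theorem exists_radial_schwartz_kernel {r : ℝ} (hr : 0 < r) :
    ∃ κ : 𝓢(E, ℝ), (∀ x, 0 ≤ κ x) ∧ (∀ x y, ‖x‖ = ‖y‖ → κ x = κ y) ∧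
      tsupport κ ⊆ Metric.closedBall 0 r ∧ ∫ x, κ x = 1 := by
  let b : ContDiffBump (0 : ℝ) := ⟨r ^ 2 / 2, r ^ 2, by positivity, by linarith [pow_pos hr 2]⟩
  have hsupp : tsupport (fun x : E => b (‖x‖ ^ 2)) ⊆ Metric.closedBall 0 r := by
    refine closure_minimal (fun x hx => ?_) Metric.isClosed_closedBall
    have hxb : ‖x‖ ^ 2 ∈ Function.support b := hx
    rw [b.support_eq, mem_ball_zero_iff, norm_pow, norm_norm] at hxb
    exact mem_closedBall_zero_iff.2 (lt_of_pow_lt_pow_left₀ 2 hr.le hxb).le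
  have hcs : HasCompactSupport fun x : E => b (‖x‖ ^ 2) :=
    (isCompact_closedBall 0 r).of_isClosed_subset (isClosed_tsupport _) hsupp
  let β : 𝓢(E, ℝ) := hcs.toSchwartzMap (b.contDiff.comp (contDiff_norm_sq ℝ))
  have hpos : 0 < ∫ x, β x := by
    refine (integral_pos_iff_support_of_nonneg (fun x => b.nonneg) β.integrable).2
      ((β.continuous.isOpen_support.measure_pos volume) ⟨0, ?_⟩)
    simpa [β] using (b.pos_of_mem_ball (Metric.mem_ball_self b.rOut_pos)).ne'
  refine ⟨(∫ x, β x)⁻¹ • β, fun x => mul_nonneg (inv_nonneg.2 hpos.le) b.nonneg,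
    fun x y hxy => ?_, ?_, ?_⟩
  · simp [β, hxy]
  · exact (tsupport_smul_subset_right (fun _ => (∫ x, β x)⁻¹) β).trans hsupp
  · simp [integral_const_mul, hpos.ne']

/-- The convolution of `f` with the reflection of the kernel `κ`. -/
def mollify (f : E → ℝ) (κ : 𝓢(E, ℝ)) (y : E) : ℝ :=
  ∫ x, f x * κ (x - y)

variable {f : E → ℝ}

theorem integrable_mul_schwartz_sub (hf : Integrable f) (κ : 𝓢(E, ℝ)) (y : E) :
    Integrable fun x => f x * κ (x - y) :=
  integrable_mul_schwartz_of_integrable hf (κ.compSubConstCLM ℝ y)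

theorem norm_mul_schwartz_le {V : Type*} [NormedAddCommGroup V] [NormedSpace ℝ V] (f : V → ℝ)
    (κ : 𝓢(V, ℝ)) (x y : V) : ‖f x * κ y‖ ≤ ‖f x‖ * SchwartzMap.seminorm ℝ 0 0 κ :=
  (norm_mul_le _ _).trans (mul_le_mul_of_nonneg_left (κ.norm_le_seminorm ℝ y) (norm_nonneg _))

theorem continuous_mollify (hf : Integrable f) (κ : 𝓢(E, ℝ)) : Continuous (mollify f κ) :=
  continuous_of_dominated (fun y => (integrable_mul_schwartz_sub hf κ y).aestronglyMeasurable)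
    (fun y => .of_forall fun x => norm_mul_schwartz_le f κ x (x - y)) (hf.norm.mul_const _)
    (.of_forall fun x => by fun_prop)

theorem hasDerivAt_mollify_add_smul (hf : Integrable f) (κ : 𝓢(E, ℝ)) (y v : E) (t : ℝ) :
    HasDerivAt (fun s : ℝ => mollify f κ (y + s • v)) (mollify f (∂_{-v} κ) (y + t • v)) t := by
  have hsub : ∀ (s : ℝ) (x : E), x - (y + s • v) = x - y + s • -v := fun s x => by module
  refine (hasDerivAt_integral_of_dominated_loc_of_deriv_le univ_mem
    (.of_forall fun s => (integrable_mul_schwartz_sub hf κ (y + s • v)).aestronglyMeasurable)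
    (integrable_mul_schwartz_sub hf κ (y + t • v))
    (integrable_mul_schwartz_sub hf (∂_{-v} κ) (y + t • v)).aestronglyMeasurable
    (.of_forall fun x s _ => norm_mul_schwartz_le f (∂_{-v} κ) x (x - (y + s • v)))
    (hf.norm.mul_const _) (.of_forall fun x s _ => ?_)).2
  simp only [hsub]
  exact (hasDerivAt_comp_add_smul κ (x - y) (-v) s).const_mul (f x)

theorem hasSecondDerivAt_mollify_add_smul (hf : Integrable f) (κ : 𝓢(E, ℝ)) (y v : E) :
    HasSecondDerivAt (fun s : ℝ => mollify f κ (y + s • v)) (mollify f (∂_{v} (∂_{v} κ)) y) 0 := by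
  refine ⟨_, .of_forall (hasDerivAt_mollify_add_smul hf κ y v), ?_⟩
  simpa [LineDeriv.lineDerivOp_left_neg, LineDeriv.lineDerivOp_neg] using
    hasDerivAt_mollify_add_smul hf (∂_{-v} κ) y v 0

theorem IsWeaklyFrameSubharmonicOn.isFrameSubharmonicOn_mollify [Fintype ι] {𝒲 : Set (ι → E)}
    {R r : ℝ} (hfsub : IsWeaklyFrameSubharmonicOn 𝒲 (Metric.ball 0 R) f) (hf : Integrable f)
    {κ : 𝓢(E, ℝ)} (hκ : ∀ x, 0 ≤ κ x) (hκr : tsupport κ ⊆ Metric.closedBall 0 r) :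
    IsFrameSubharmonicOn 𝒲 (Metric.ball 0 (R - r)) (mollify f κ) := fun y hy w hw => by
  refine ⟨_, fun k => hasSecondDerivAt_mollify_add_smul hf κ y (w k), ?_⟩
  have hsum : ∑ k, mollify f (∂_{w k} (∂_{w k} κ)) y =
      ∫ x, f x * frameLaplacian w (κ.compSubConstCLM ℝ y) x := by
    simp only [mollify]
    rw [← integral_finsetSum _ fun k _ => integrable_mul_schwartz_sub hf _ y]
    simp only [← Finset.mul_sum, frameLaplacian_compSubConstCLM, SchwartzMap.compSubConstCLM_apply,
      frameLaplacian_apply]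
  have hcs : HasCompactSupport κ :=
    (isCompact_closedBall 0 r).of_isClosed_subset (isClosed_tsupport _) hκr
  rw [hsum]
  refine hfsub w hw _ (fun x => hκ (x - y)) (hcs.comp_homeomorph (Homeomorph.subRight y))
    ((tsupport_compSubConstCLM y κ).trans_subset fun x hx => ?_)
  have hxy := mem_closedBall_zero_iff.1 (hκr hx)
  rw [mem_ball_zero_iff] at hy ⊢
  linarith [norm_le_norm_sub_add x y]

theorem mollify_eq_of_norm_eq {κ : 𝓢(E, ℝ)} (hf : ∀ x y, ‖x‖ = ‖y‖ → f x = f y)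
    (hκ : ∀ x y, ‖x‖ = ‖y‖ → κ x = κ y) (x y : E) (hxy : ‖x‖ = ‖y‖) :
    mollify f κ x = mollify f κ y := by
  let σ : E ≃ₗᵢ[ℝ] E := (ℝ ∙ (x - y))ᗮ.reflection
  have hσ : σ x = y := Submodule.reflection_sub hxy
  rw [mollify, mollify,
    ← σ.measurePreserving.integral_comp σ.toHomeomorph.measurableEmbedding fun z => f z * κ (z - y)]
  refine integral_congr_ae (.of_forall fun z => ?_)
  change f z * κ (z - x) = f (σ z) * κ (σ z - y)
  rw [← hσ, ← map_sub, hf (σ z) z (σ.norm_map z), hκ _ (z - x) (σ.norm_map _)]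

theorem setIntegral_mollify (hf : Integrable f) (κ : 𝓢(E, ℝ)) {s : Set E} (hs : volume s ≠ ⊤) :
    ∫ y in s, mollify f κ y = ∫ x, f x * ∫ y in s, κ (x - y) := by
  have : IsFiniteMeasure (volume.restrict s) := isFiniteMeasure_restrict.2 hs
  have hint : Integrable (fun q : E × E => f q.2 * κ (q.2 - q.1))
      ((volume.restrict s).prod volume) :=
    (hf.comp_snd _).mul_bdd (c := SchwartzMap.seminorm ℝ 0 0 κ)
      (by fun_prop : Continuous fun q : E × E => κ (q.2 - q.1)).aestronglyMeasurable
      (.of_forall fun q => κ.norm_le_seminorm ℝ _)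
  simp only [mollify]
  rw [integral_integral_swap (f := fun y x => f x * κ (x - y)) hint]
  simp only [integral_const_mul]

theorem setIntegral_schwartz_sub_eq_zero {κ : 𝓢(E, ℝ)} {r : ℝ}
    (hκr : tsupport κ ⊆ Metric.closedBall 0 r) {x : E} {s : Set E}
    (hxs : Metric.closedBall x r ⊆ sᶜ) : ∫ y in s, κ (x - y) = 0 := by
  refine setIntegral_eq_zero_of_forall_eq_zero fun y hy => ?_
  refine image_eq_zero_of_notMem_tsupport fun h => hxs ?_ hy
  simpa [dist_eq_norm, norm_sub_rev] using hκr h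

theorem setIntegral_schwartz_sub_eq_integral {κ : 𝓢(E, ℝ)} {r : ℝ}
    (hκr : tsupport κ ⊆ Metric.closedBall 0 r) {x : E} {s : Set E}
    (hxs : Metric.closedBall x r ⊆ s) : ∫ y in s, κ (x - y) = ∫ y, κ y := by
  rw [← integral_sub_left_eq_self κ volume x]
  refine setIntegral_eq_integral_of_forall_compl_eq_zero fun y hy => ?_
  refine image_eq_zero_of_notMem_tsupport fun h => hy (hxs ?_)
  simpa [dist_eq_norm, norm_sub_rev] using hκr h

variable {l : Filter ι} {κ : ι → 𝓢(E, ℝ)}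

theorem tendsto_setIntegral_schwartz_sub (hκ1 : ∀ i, ∫ x, κ i x = 1)
    (hκl : ∀ r > 0, ∀ᶠ i in l, tsupport (κ i) ⊆ Metric.closedBall 0 r) {s : Set E} {x : E}
    (hx : x ∉ frontier s) :
    Tendsto (fun i => ∫ y in s, κ i (x - y)) l (𝓝 (s.indicator 1 x)) := by
  refine tendsto_const_nhds.congr' ?_
  by_cases hxs : x ∈ s
  · have hint : s ∈ 𝓝 x := mem_interior_iff_mem_nhds.1
      (by_contra fun h => hx ⟨subset_closure hxs, h⟩)
    obtain ⟨r, hr, hrs⟩ := Metric.nhds_basis_closedBall.mem_iff.1 hint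
    filter_upwards [hκl r hr] with i hi
    rw [setIntegral_schwartz_sub_eq_integral hi hrs, hκ1, indicator_of_mem hxs, Pi.one_apply]
  · have hint : sᶜ ∈ 𝓝 x := mem_interior_iff_mem_nhds.1
      (by_contra fun h => hx (frontier_compl s ▸ ⟨subset_closure hxs, h⟩))
    obtain ⟨r, hr, hrs⟩ := Metric.nhds_basis_closedBall.mem_iff.1 hint
    filter_upwards [hκl r hr] with i hi
    rw [setIntegral_schwartz_sub_eq_zero hi hrs, indicator_of_notMem hxs]

theorem tendsto_setIntegral_mollify [l.IsCountablyGenerated] (hκ : ∀ i x, 0 ≤ κ i x)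
    (hκ1 : ∀ i, ∫ x, κ i x = 1)
    (hκl : ∀ r > 0, ∀ᶠ i in l, tsupport (κ i) ⊆ Metric.closedBall 0 r) (hf : Integrable f)
    {s : Set E} (hsm : MeasurableSet s) (hs : volume s ≠ ⊤) (hsf : volume (frontier s) = 0) :
    Tendsto (fun i => ∫ y in s, mollify f (κ i) y) l (𝓝 (∫ x in s, f x)) := by
  have hbound : ∀ i x, ‖∫ y in s, κ i (x - y)‖ ≤ 1 := fun i x => by
    rw [Real.norm_of_nonneg (integral_nonneg fun y => hκ i _), ← hκ1 i,
      ← integral_sub_left_eq_self (κ i) volume x]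
    exact setIntegral_le_integral ((κ i).integrable.comp_sub_left x) (.of_forall fun y => hκ i _)
  rw [setIntegral_eq_integral_mul_indicator_one hsm]
  simp only [setIntegral_mollify hf _ hs]
  refine tendsto_integral_filter_of_dominated_convergence (fun x => ‖f x‖) (.of_forall fun i => ?_)
    (.of_forall fun i => .of_forall fun x => ?_) hf.norm ?_
  · have hmeas : StronglyMeasurable fun q : E × E => κ i (q.1 - q.2) :=
      (by fun_prop : Continuous fun q : E × E => κ i (q.1 - q.2)).stronglyMeasurable
    exact hf.aestronglyMeasurable.mul hmeas.integral_prod_right'.aestronglyMeasurable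
  · rw [norm_mul]
    exact mul_le_of_le_one_right (norm_nonneg _) (hbound i x)
  · filter_upwards [compl_mem_ae_iff.2 hsf] with x hx
    exact (tendsto_setIntegral_schwartz_sub hκ1 hκl hx).const_mul (f x)

end Mollification

section ConvexOnIntegral

theorem convexOn_integral {V α : Type*} [AddCommGroup V] [Module ℝ V] [MeasurableSpace α]
    {μ : Measure α} {S : Set V} {φ : α → V → ℝ} (hS : Convex ℝ S)
    (hφ : ∀ᵐ a ∂μ, ConvexOn ℝ S (φ a)) (hint : ∀ s ∈ S, Integrable (fun a => φ a s) μ) :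
    ConvexOn ℝ S fun s => ∫ a, φ a s ∂μ := by
  refine ⟨hS, fun s hs t ht a b ha hb hab => ?_⟩
  calc ∫ x, φ x (a • s + b • t) ∂μ ≤ ∫ x, (a • φ x s + b • φ x t) ∂μ :=
        integral_mono_ae (hint _ (hS hs ht ha hb hab))
          (((hint s hs).smul a).add ((hint t ht).smul b)) (hφ.mono fun x hx => hx.2 hs ht ha hb hab)
    _ = a • ∫ x, φ x s ∂μ + b • ∫ x, φ x t ∂μ := by
        rw [← integral_smul, ← integral_smul]
        exact integral_add ((hint s hs).smul a) ((hint t ht).smul b)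

theorem convexOn_of_tendsto {V ι : Type*} [AddCommGroup V] [Module ℝ V] {l : Filter ι} [l.NeBot]
    {S : Set V} {φ : ι → V → ℝ} {ψ : V → ℝ} (hφ : ∀ᶠ i in l, ConvexOn ℝ S (φ i))
    (hlim : ∀ s ∈ S, Tendsto (fun i => φ i s) l (𝓝 (ψ s))) : ConvexOn ℝ S ψ := by
  obtain ⟨i, hi⟩ := hφ.exists
  refine ⟨hi.1, fun s hs t ht a b ha hb hab => ?_⟩
  exact le_of_tendsto_of_tendsto (hlim _ (hi.1 hs ht ha hb hab))
    (((hlim s hs).const_smul a).add ((hlim t ht).const_smul b))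
    (hφ.mono fun j hj => hj.2 hs ht ha hb hab)

end ConvexOnIntegral

section BallAverages

variable {E ι : Type*} [NormedAddCommGroup E] [InnerProductSpace ℝ E] [FiniteDimensional ℝ E]
  [MeasurableSpace E] [BorelSpace E]

theorem setAverage_closedBall_comp_add_smul (f : E → ℝ) (x : E) {t : ℝ} (ht : 0 < t) :
    ⨍ y in Metric.closedBall 0 1, f (x + t • y) = ⨍ y in Metric.closedBall x t, f y := by
  have hball : t • Metric.closedBall (0 : E) 1 = Metric.closedBall 0 t := by
    rw [smul_closedBall _ _ zero_le_one, smul_zero, Real.norm_of_nonneg ht.le, mul_one]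
  have hpre : (x + ·) ⁻¹' Metric.closedBall x t = Metric.closedBall 0 t := by
    rw [preimage_add_closedBall, sub_self]
  rw [setAverage_eq, setAverage_eq,
    Measure.setIntegral_comp_smul_of_pos volume (fun z => f (x + z)) _ ht, hball, ← hpre,
    (measurePreserving_add_left volume x).setIntegral_preimage_emb
      (measurableEmbedding_addLeft x) f, Measure.addHaar_real_closedBall' volume x ht.le]
  simp only [smul_eq_mul]
  field_simp

theorem setAverage_closedBall_comp_smul (f : E → ℝ) (x : E) {r t : ℝ} (hr : 0 < r) (ht : 0 < t) :
    ⨍ y in Metric.closedBall x t, f (r • y) = ⨍ y in Metric.closedBall (r • x) (r * t), f y := by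
  rw [← setAverage_closedBall_comp_add_smul _ x ht,
    ← setAverage_closedBall_comp_add_smul f _ (mul_pos hr ht)]
  simp only [smul_add, mul_smul]

theorem IsFrameSubharmonicOn.convexOn_setAverage_closedBall [Fintype ι] {𝒲 : Set (ι → E)}
    {p R : ℝ} (hp : 2 < p) (h𝒲 : HasFrameChar 𝒲 p) (hR : 0 < R) {W : E → ℝ} (hWc : Continuous W)
    (hW : IsFrameSubharmonicOn 𝒲 (Metric.ball 0 R) W) (hWrad : ∀ x y, ‖x‖ = ‖y‖ → W x = W y) :
    ConvexOn ℝ (Ici (R ^ (2 - p))) fun s => ⨍ y in Metric.closedBall 0 (s ^ (2 - p)⁻¹), W y := by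
  have hconv : ConvexOn ℝ (Ici (R ^ (2 - p))) fun s =>
      ∫ y in Metric.closedBall 0 1, W (s ^ (2 - p)⁻¹ • y) := by
    refine convexOn_integral (convex_Ici _) ?_ fun s _ =>
      (by fun_prop : Continuous fun y => W (s ^ (2 - p)⁻¹ • y)).continuousOn.integrableOn_compact
        (isCompact_closedBall 0 1)
    filter_upwards [ae_restrict_mem measurableSet_closedBall] with y hy
    exact hW.convexOn_radial hp h𝒲 hR hWc hWrad (mem_closedBall_zero_iff.1 hy)
  have hunit : 0 ≤ (volume.real (Metric.closedBall (0 : E) 1))⁻¹ := inv_nonneg.2 measureReal_nonneg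
  refine (hconv.smul hunit).congr fun s hs => ?_
  have hs0 : 0 < s := (Real.rpow_pos_of_pos hR _).trans_le hs
  rw [← setAverage_closedBall_comp_add_smul W 0 (Real.rpow_pos_of_pos hs0 _), setAverage_eq]
  simp only [zero_add]

theorem IsWeaklyFrameSubharmonicOn.convexOn_setAverage_closedBall [Fintype ι] {𝒲 : Set (ι → E)}
    {p R R₀ : ℝ} (hp : 2 < p) (h𝒲 : HasFrameChar 𝒲 p) (hR₀ : 0 < R₀) (hR : R₀ < R) {f : E → ℝ}
    (hf : Integrable f) (hfsub : IsWeaklyFrameSubharmonicOn 𝒲 (Metric.ball 0 R) f)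
    (hfrad : ∀ x y, ‖x‖ = ‖y‖ → f x = f y) :
    ConvexOn ℝ (Ici (R₀ ^ (2 - p))) fun s => ⨍ y in Metric.closedBall 0 (s ^ (2 - p)⁻¹), f y := by
  obtain ⟨r, -, hr, hrlim⟩ := exists_seq_strictAnti_tendsto (0 : ℝ)
  choose κ hκ hκrad hκsupp hκ1 using fun i => exists_radial_schwartz_kernel (E := E) (hr i)
  have hκl : ∀ δ > 0, ∀ᶠ i in atTop, tsupport (κ i) ⊆ Metric.closedBall 0 δ := fun δ hδ =>
    (hrlim.eventually_le_const hδ).mono fun i hi =>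
      (hκsupp i).trans (Metric.closedBall_subset_closedBall hi)
  refine convexOn_of_tendsto (φ := fun i s =>
    ⨍ y in Metric.closedBall 0 (s ^ (2 - p)⁻¹), mollify f (κ i) y) (l := atTop) ?_ fun s hs => ?_
  · filter_upwards [hκl (R - R₀) (sub_pos.2 hR)] with i hi
    refine IsFrameSubharmonicOn.convexOn_setAverage_closedBall hp h𝒲 hR₀
      (continuous_mollify hf (κ i)) ?_ (mollify_eq_of_norm_eq hfrad (hκrad i))
    simpa using hfsub.isFrameSubharmonicOn_mollify hf (hκ i) hi
  · have hs0 : 0 < s := (Real.rpow_pos_of_pos hR₀ _).trans_le hs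
    simp only [setAverage_eq]
    refine (tendsto_setIntegral_mollify hκ hκ1 hκl hf measurableSet_closedBall
      measure_closedBall_lt_top.ne ?_).const_smul _
    rw [frontier_closedBall _ (Real.rpow_pos_of_pos hs0 _).ne']
    exact Measure.addHaar_sphere_of_ne_zero _ _ (Real.rpow_pos_of_pos hs0 _).ne'

end BallAverages

section FSubharmonic

variable {n : ℕ} {F : Set (Matrix (Fin n) (Fin n) ℝ)} {p R : ℝ}

theorem hasFrameChar_setOf_isPolarFrame (hF : IsConeSubequation F) (hFconv : Convex ℝ F)
    (hchar : HasRieszChar F p) : HasFrameChar {w : Fin n → EucSp n | IsPolarFrame F w} p :=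
  fun e he => ⟨fun w hw => by
    have := hw.mul_sum_inner_sq_le hF.1 hchar he
    rw [Finset.sum_sub_distrib, ← Finset.mul_sum]
    linarith, fun ε hε => by
    obtain ⟨w, hw, hlt⟩ := exists_isPolarFrame hF hFconv hchar he hε
    refine ⟨w, hw, ?_⟩
    rw [Finset.sum_sub_distrib, ← Finset.mul_sum]
    linarith⟩

variable {Ω : Set (EucSp n)} {u : EucSp n → EReal} {x : EucSp n}

theorem IsFSubharmonicOn.isWeaklyFrameSubharmonicOn (hΩ : IsOpen Ω) (hu : IsFSubharmonicOn F Ω u)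
    (hae : ∀ᵐ y, y ∈ Ω → u y ≠ ⊥) (hloc : LocallyIntegrableOn (fun y => (u y).toReal) Ω)
    {ι : Type*} [Fintype ι] :
    IsWeaklyFrameSubharmonicOn {w : ι → EucSp n | IsPolarFrame F w} Ω fun y => (u y).toReal :=
  fun _ hw _ hη hηc hηΩ => integral_toReal_mul_frameLaplacian_nonneg hΩ hu.1 hu.2.1 hae hloc
    (IsPolarFrame.isViscositySubsolutionOn hw hu) hη hηc hηΩ

theorem IsFSubharmonicOn.convexOn_ballAvg (hp : 2 < p) (hF : IsConeSubequation F)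
    (hFconv : Convex ℝ F) (hST : STInvariant F) (hchar : HasRieszChar F p) (hΩ : IsOpen Ω)
    (hu : IsFSubharmonicOn F Ω u) (hae : ∀ᵐ y, y ∈ Ω → u y ≠ ⊥)
    (hloc : LocallyIntegrableOn (fun y => (u y).toReal) Ω) {R₀ : ℝ} (hR₀ : 0 < R₀) (hR : R₀ < R)
    (hx : Metric.closedBall x R ⊆ Ω) :
    ConvexOn ℝ (Ici (R₀ ^ (2 - p))) fun s => ballAvg u x (s ^ (2 - p)⁻¹) := by
  set g : EucSp n → ℝ := (Metric.closedBall x R).indicator fun y => (u y).toReal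
  have hg : Integrable g := (integrable_indicator_iff measurableSet_closedBall).2
    (hloc.integrableOn_compact_subset hx (isCompact_closedBall x R))
  have hgu : ∀ y ∈ Metric.closedBall x R, g y = (u y).toReal := fun y hy => indicator_of_mem hy _
  have hgsub : IsWeaklyFrameSubharmonicOn {w : Fin n → EucSp n | IsPolarFrame F w}
      (Metric.ball 0 R) fun y => g (x + y) := by
    rw [← sub_self x, ← preimage_add_ball]
    refine IsWeaklyFrameSubharmonicOn.comp_const_add ?_ x
    exact ((hu.isWeaklyFrameSubharmonicOn hΩ hae hloc).mono
      (Metric.ball_subset_closedBall.trans hx)).congr fun y hy =>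
        (hgu y (Metric.ball_subset_closedBall hy)).symm
  obtain ⟨f, hf, hfrad, hfsub, hfavg⟩ := hST.exists_radial_average (hg.comp_add_left x) hgsub
  refine (hfsub.convexOn_setAverage_closedBall hp (hasFrameChar_setOf_isPolarFrame hF hFconv hchar)
    hR₀ hR hf hfrad).congr fun s hs => ?_
  have hs0 : 0 < s := (Real.rpow_pos_of_pos hR₀ _).trans_le hs
  have hsR : s ^ (2 - p)⁻¹ ≤ R :=
    ((Real.rpow_inv_le_iff_of_neg hs0 hR₀ (by linarith)).2 hs).trans hR.le
  have ht : 0 < s ^ (2 - p)⁻¹ := Real.rpow_pos_of_pos hs0 _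
  calc ⨍ y in Metric.closedBall 0 (s ^ (2 - p)⁻¹), f y
      = ⨍ y in Metric.closedBall 0 (s ^ (2 - p)⁻¹), g (x + y) := by
        rw [setAverage_eq, hfavg, ← setAverage_eq]
    _ = ⨍ y in Metric.closedBall x (s ^ (2 - p)⁻¹), g y := by
        rw [← setAverage_closedBall_comp_add_smul _ 0 ht,
          ← setAverage_closedBall_comp_add_smul g x ht]
        simp only [zero_add]
    _ = ballAvg u x (s ^ (2 - p)⁻¹) := setAverage_congr_fun measurableSet_closedBall
        (.of_forall fun y hy => hgu y (Metric.closedBall_subset_closedBall hsR hy))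

end FSubharmonic

section Density

theorem tendsto_sub_div_sub_atTop {Φ : ℝ → ℝ} {m a b : ℝ}
    (h : Tendsto (fun s => (Φ s - a) / (s - b)) atTop (𝓝 m)) (a' b' : ℝ) :
    Tendsto (fun s => (Φ s - a') / (s - b')) atTop (𝓝 m) := by
  have hsub : Tendsto (fun s : ℝ => s - b') atTop atTop :=
    tendsto_atTop_add_const_right atTop (-b') tendsto_id
  have hlim := h.add (((h.mul_const (b' - b)).add_const (a - a')).div_atTop hsub)
  rw [add_zero] at hlim
  refine hlim.congr' ?_
  filter_upwards [eventually_gt_atTop b, eventually_gt_atTop b'] with s hs hs'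
  have hb : s - b ≠ 0 := (sub_pos.2 hs).ne'
  have hb' : s - b' ≠ 0 := (sub_pos.2 hs').ne'
  field_simp
  ring

theorem exists_tendsto_div_atTop_of_convexOn {Φ : ℝ → ℝ} {a : ℝ} (hΦ : ConvexOn ℝ (Ici a) Φ)
    (hbdd : BddAbove (Φ '' Ici a)) :
    ∃ m ≤ 0, Tendsto (fun s => Φ s / s) atTop (𝓝 m) ∧
      ∀ s t, a ≤ s → s < t → (Φ t - Φ s) / (t - s) ≤ m := by
  obtain ⟨M, hM⟩ := hbdd
  have hmono : ∀ s t, a < s → s ≤ t → (Φ s - Φ a) / (s - a) ≤ (Φ t - Φ a) / (t - a) :=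
    fun s t hs hst => hΦ.secant_mono self_mem_Ici hs.le (hs.le.trans hst) hs.ne'
      (hs.trans_le hst).ne' hst
  have hnonpos : ∀ s, a < s → (Φ s - Φ a) / (s - a) ≤ 0 := fun s hs => by
    refine ge_of_tendsto (tendsto_const_nhds (x := M - Φ a).div_atTop
      (tendsto_atTop_add_const_right atTop (-a) tendsto_id)) ?_
    filter_upwards [eventually_ge_atTop s] with t ht
    refine (hmono s t hs ht).trans ?_
    have hat : a < t := hs.trans_le ht
    exact div_le_div_of_nonneg_right (sub_le_sub_right (hM (mem_image_of_mem Φ hat.le)) _)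
      (sub_pos.2 hat).le
  obtain ⟨m, hm⟩ : ∃ m, Tendsto (fun s => (Φ s - Φ a) / (s - a)) atTop (𝓝 m) :=
    ⟨_, tendsto_comp_val_Ioi_atTop.1 (tendsto_atTop_ciSup (fun s t hst => hmono s t s.2 hst)
      ⟨0, forall_mem_range.2 fun s : Ioi a => hnonpos s s.2⟩)⟩
  refine ⟨m, le_of_tendsto hm ((eventually_gt_atTop a).mono hnonpos), ?_, fun s t hs hst => ?_⟩
  · simpa only [sub_zero] using tendsto_sub_div_sub_atTop hm 0 0
  · refine ge_of_tendsto (tendsto_sub_div_sub_atTop hm (Φ t) t) ?_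
    filter_upwards [eventually_gt_atTop t] with r hr
    exact hΦ.slope_mono_adjacent hs (hs.trans (hst.trans hr).le) hst hr

theorem rieszKernel_of_two_lt {p : ℝ} (hp : 2 < p) (t : ℝ) : rieszKernel p t = -t ^ (2 - p) := by
  rw [rieszKernel, if_neg hp.not_gt, if_neg hp.ne']

theorem exists_density_of_convexOn {p R : ℝ} (hp : 2 < p) (hR : 0 < R) {V : ℝ → ℝ}
    (hV : ConvexOn ℝ (Ici (R ^ (2 - p))) fun s => V (s ^ (2 - p)⁻¹))
    (hbdd : BddAbove (V '' Ioc 0 R)) :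
    ∃ d, 0 ≤ d ∧ Tendsto (fun t => V t / rieszKernel p t) (𝓝[>] 0) (𝓝 d) ∧
      ∀ a b, 0 < a → a < b → b ≤ R → d * (a ^ (2 - p) - b ^ (2 - p)) ≤ V b - V a := by
  have hp0 : 2 - p < 0 := by linarith
  have hR' : 0 < R ^ (2 - p) := Real.rpow_pos_of_pos hR _
  have hinv : ∀ t : ℝ, 0 ≤ t → (t ^ (2 - p)) ^ (2 - p)⁻¹ = t := fun t ht =>
    Real.rpow_rpow_inv ht hp0.ne
  obtain ⟨m, hm0, hm, hslope⟩ := exists_tendsto_div_atTop_of_convexOn hV (by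
    refine hbdd.mono (image_subset_iff.2 fun s hs => ?_)
    have hs0 : 0 < s := hR'.trans_le hs
    exact mem_image_of_mem V ⟨Real.rpow_pos_of_pos hs0 _,
      (Real.rpow_inv_le_iff_of_neg hs0 hR hp0).2 hs⟩)
  refine ⟨-m, neg_nonneg.2 hm0, ?_, fun a b ha hab hb => ?_⟩
  · refine (hm.comp (tendsto_rpow_neg_nhdsGT_zero hp0)).neg.congr' ?_
    filter_upwards [self_mem_nhdsWithin] with t ht
    rw [Function.comp_apply, hinv t (le_of_lt ht), rieszKernel_of_two_lt hp, div_neg]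
  · have hb0 : 0 < b := ha.trans hab
    have hlt : b ^ (2 - p) < a ^ (2 - p) := Real.rpow_lt_rpow_of_neg ha hab hp0
    have h := hslope _ _ (Real.rpow_le_rpow_of_nonpos hb0 hb hp0.le) hlt
    rw [div_le_iff₀ (sub_pos.2 hlt), hinv a ha.le, hinv b hb0.le] at h
    linarith

variable {n : ℕ} {u : EucSp n → EReal} {Ω : Set (EucSp n)}

theorem bddAbove_toReal_image_of_isCompact {X : Type*} [TopologicalSpace X] {K : Set X}
    (hK : IsCompact K) {u : X → EReal} (husc : UpperSemicontinuousOn u K) (hu : ∀ x ∈ K, u x < ⊤) :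
    BddAbove ((fun x => (u x).toReal) '' K) := by
  obtain rfl | hne := K.eq_empty_or_nonempty
  · simp
  obtain ⟨z, hz, hmax⟩ := husc.exists_isMaxOn hne hK
  refine ⟨max (u z).toReal 0, forall_mem_image.2 fun x hx => ?_⟩
  by_cases hbot : u x = ⊥
  · simp [hbot]
  · exact (EReal.toReal_le_toReal (hmax hx) hbot (hu z hz).ne).trans (le_max_left _ _)

theorem ballAvg_le {x : EucSp n} {t M : ℝ} (ht : 0 < t)
    (hint : IntegrableOn (fun y => (u y).toReal) (Metric.closedBall x t))
    (hM : ∀ y ∈ Metric.closedBall x t, (u y).toReal ≤ M) : ballAvg u x t ≤ M :=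
  (convex_Iic M).set_average_mem isClosed_Iic (Metric.measure_closedBall_pos volume x ht).ne'
    measure_closedBall_lt_top.ne ((ae_restrict_mem measurableSet_closedBall).mono hM) hint

theorem IsFSubharmonicOn.exists_density {F : Set (Matrix (Fin n) (Fin n) ℝ)} {p R R₀ : ℝ}
    {x : EucSp n} (hp : 2 < p) (hF : IsConeSubequation F)
    (hFconv : Convex ℝ F) (hST : STInvariant F) (hchar : HasRieszChar F p) (hΩ : IsOpen Ω)
    (hu : IsFSubharmonicOn F Ω u) (hae : ∀ᵐ y, y ∈ Ω → u y ≠ ⊥)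
    (hloc : LocallyIntegrableOn (fun y => (u y).toReal) Ω) (hR₀ : 0 < R₀) (hR : R₀ < R)
    (hx : Metric.closedBall x R ⊆ Ω) :
    ∃ d, 0 ≤ d ∧ Tendsto (fun t => ballAvg u x t / rieszKernel p t) (𝓝[>] 0) (𝓝 d) ∧
      ∀ a b, 0 < a → a < b → b ≤ R₀ →
        d * (a ^ (2 - p) - b ^ (2 - p)) ≤ ballAvg u x b - ballAvg u x a := by
  refine exists_density_of_convexOn hp hR₀
    (hu.convexOn_ballAvg hp hF hFconv hST hchar hΩ hae hloc hR₀ hR hx) ?_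
  have hK : IsCompact (Metric.closedBall x R) := isCompact_closedBall x R
  obtain ⟨M, hM⟩ := bddAbove_toReal_image_of_isCompact hK (hu.1.mono hx)
    fun y hy => hu.2.1 y (hx hy)
  refine ⟨M, forall_mem_image.2 fun t ht => ?_⟩
  have htR : Metric.closedBall x t ⊆ Metric.closedBall x R :=
    Metric.closedBall_subset_closedBall (ht.2.trans hR.le)
  exact ballAvg_le ht.1 ((hloc.integrableOn_compact_subset hx hK).mono_set htR)
    fun y hy => hM (mem_image_of_mem _ (htR hy))

end Density

section Tangent

theorem abs_setAverage_le_add {α : Type*} [MeasurableSpace α] {μ : Measure α} {s t : Set α}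
    (hst : s ⊆ t) (hs : MeasurableSet s) (hs0 : μ s ≠ 0) (hs1 : μ s ≠ ⊤) {v g : α → ℝ}
    (hv : IntegrableOn v t μ) (hg : IntegrableOn g t μ) {A : ℝ} (hA : ∀ x ∈ s, |g x| ≤ A) :
    |⨍ x in s, v x ∂μ| ≤ A + (μ.real s)⁻¹ * ∫ x in t, |v x - g x| ∂μ := by
  have hpos : 0 < μ.real s := ENNReal.toReal_pos hs0 hs1
  have hdiff : IntegrableOn (fun x => |v x - g x|) t μ := (hv.sub hg).abs
  have hconst : IntegrableOn (fun _ => A) s μ := integrableOn_const hs1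
  have hint : |∫ x in s, v x ∂μ| ≤ A * μ.real s + ∫ x in t, |v x - g x| ∂μ := calc
    |∫ x in s, v x ∂μ| ≤ ∫ x in s, |v x| ∂μ := abs_integral_le_integral_abs
    _ ≤ ∫ x in s, (A + |v x - g x|) ∂μ := by
        refine setIntegral_mono_on (hv.mono_set hst).abs
          (hconst.add (hdiff.mono_set hst)) hs fun x hx => ?_
        linarith [hA x hx, abs_sub_abs_le_abs_sub (v x) (g x)]
    _ = A * μ.real s + ∫ x in s, |v x - g x| ∂μ := by
        rw [integral_add hconst (hdiff.mono_set hst), setIntegral_const,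
          smul_eq_mul, mul_comm]
    _ ≤ A * μ.real s + ∫ x in t, |v x - g x| ∂μ := by
        linarith [setIntegral_mono_set hdiff (.of_forall fun x => abs_nonneg _) hst.eventuallyLE]
  rw [setAverage_eq, smul_eq_mul, abs_mul, abs_of_pos (inv_pos.2 hpos)]
  calc (μ.real s)⁻¹ * |∫ x in s, v x ∂μ|
      ≤ (μ.real s)⁻¹ * (A * μ.real s + ∫ x in t, |v x - g x| ∂μ) := by gcongr
    _ = A + (μ.real s)⁻¹ * ∫ x in t, |v x - g x| ∂μ := by field_simp

theorem tendsto_zero_of_forall_eventually_mul_rpow_le {α : Type*} {l : Filter α} {d : α → ℝ}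
    {q b C : ℝ} (hq : q < 0) (hb : 0 < b) (hd : ∀ᶠ x in l, 0 ≤ d x)
    (hC : ∀ τ, 0 < τ → τ < b → ∀ᶠ x in l, d x * (τ ^ q - b ^ q) ≤ C) : Tendsto d l (𝓝 0) := by
  refine tendsto_order.2 ⟨fun ε hε => hd.mono fun x hx => hε.trans_le hx, fun ε hε => ?_⟩
  obtain ⟨τ, hτ, hτ0, hτb⟩ := (((tendsto_rpow_neg_nhdsGT_zero hq).eventually_gt_atTop
    (b ^ q + |C| / ε)).and (Ioo_mem_nhdsGT hb)).exists
  have hgap : |C| / ε < τ ^ q - b ^ q := by linarith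
  have hpos : 0 < τ ^ q - b ^ q := (div_nonneg (abs_nonneg C) hε.le).trans_lt hgap
  filter_upwards [hC τ hτ0 hτb] with x hx
  refine lt_of_mul_lt_mul_right ?_ hpos.le
  calc d x * (τ ^ q - b ^ q) ≤ |C| := hx.trans (le_abs_self C)
    _ < ε * (τ ^ q - b ^ q) := (div_lt_iff₀' hε).1 hgap

variable {n : ℕ} {p : ℝ} {u : EucSp n → EReal}

theorem locallyIntegrable_rieszKernel_norm (hp : 2 < p) (hpn : p ≤ n) :
    LocallyIntegrable fun x : EucSp n => rieszKernel p ‖x‖ := by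
  have hn : 1 ≤ n := by
    exact_mod_cast (by linarith : (1 : ℝ) ≤ n)
  simp only [rieszKernel_of_two_lt hp]
  refine locallyIntegrable_of_norm_le_rpow (C := 1) (α := p - 2) (by simpa using hn)
    (by rw [finrank_euclideanSpace_fin]; linarith) (.of_forall fun x => ?_)
    (measurable_norm.pow_const (2 - p)).neg.aestronglyMeasurable
  rw [norm_neg, one_mul, neg_sub, Real.norm_of_nonneg (Real.rpow_nonneg (norm_nonneg _) _)]

theorem abs_rieszKernel_le (hp : 2 < p) {s t : ℝ} (hs : 0 < s) (hst : s ≤ t) :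
    |rieszKernel p t| ≤ s ^ (2 - p) := by
  rw [rieszKernel_of_two_lt hp, abs_neg, abs_of_nonneg (Real.rpow_nonneg (hs.le.trans hst) _)]
  exact Real.rpow_le_rpow_of_nonpos hs hst (by linarith)

theorem integrableOn_closedBall_comp_smul {f : EucSp n → ℝ} {r R ρ : ℝ} (hr : 0 < r)
    (hR : r * R ≤ ρ) (hf : IntegrableOn f (Metric.closedBall 0 ρ)) :
    IntegrableOn (fun z => f (r • z)) (Metric.closedBall 0 R) := by
  have hind := (integrable_indicator_iff measurableSet_closedBall).2 hf
  refine (hind.comp_smul hr.ne').integrableOn.congr_fun (fun z hz => indicator_of_mem ?_ f)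
    measurableSet_closedBall
  rw [mem_closedBall_zero_iff] at hz ⊢
  rw [norm_smul, Real.norm_of_nonneg hr.le]
  exact (mul_le_mul_of_nonneg_left hz hr.le).trans hR

theorem abs_mul_ballAvg_le (hp : 2 < p) (hpn : p ≤ n) {ρ : ℝ}
    (hu : IntegrableOn (fun y => (u y).toReal) (Metric.closedBall 0 ρ)) (Θ : ℝ) {e : EucSp n}
    (he : ‖e‖ = 1) {r τ : ℝ} (hr : 0 < r) (hrρ : r * 2 ≤ ρ) (hτ : 0 < τ) (hτ2 : τ ≤ 1 / 2) :
    |r ^ (p - 2) * ballAvg u (r • e) (r * τ)| ≤ |Θ| * (1 / 2) ^ (2 - p) +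
      (volume.real (Metric.closedBall (0 : EucSp n) τ))⁻¹ * ∫ z in Metric.closedBall 0 2,
        |r ^ (p - 2) * (u (r • z)).toReal - Θ * rieszKernel p ‖z‖| := by
  have hsub : Metric.closedBall e τ ⊆ Metric.closedBall 0 2 :=
    Metric.closedBall_subset_closedBall' (by rw [dist_zero_right]; linarith)
  have hlow : ∀ z ∈ Metric.closedBall e τ, 1 / 2 ≤ ‖z‖ := fun z hz => by
    linarith [mem_closedBall_iff_norm'.1 hz, norm_sub_norm_le e z]
  have hscale : r ^ (p - 2) * ballAvg u (r • e) (r * τ) =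
      ⨍ z in Metric.closedBall e τ, r ^ (p - 2) * (u (r • z)).toReal := by
    rw [ballAvg, ← setAverage_closedBall_comp_smul (fun y => (u y).toReal) e hr hτ, setAverage_eq,
      setAverage_eq, integral_const_mul, smul_eq_mul, smul_eq_mul, mul_left_comm]
  rw [hscale, ← Measure.addHaar_real_closedBall_center volume e τ]
  refine abs_setAverage_le_add hsub measurableSet_closedBall
    (Metric.measure_closedBall_pos volume e hτ).ne' measure_closedBall_lt_top.ne
    ((integrableOn_closedBall_comp_smul hr hrρ hu).const_mul _)
    (((locallyIntegrable_rieszKernel_norm hp hpn).integrableOn_isCompact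
      (isCompact_closedBall 0 2)).const_mul Θ) fun z hz => ?_
  rw [abs_mul]
  exact mul_le_mul_of_nonneg_left (abs_rieszKernel_le hp one_half_pos (hlow z hz)) (abs_nonneg Θ)

theorem eventually_abs_mul_ballAvg_le (hp : 2 < p) (hpn : p ≤ n) {ρ : ℝ} (hρ : 0 < ρ)
    (hu : IntegrableOn (fun y => (u y).toReal) (Metric.closedBall 0 ρ)) {Θ : ℝ}
    (hconv : Tendsto (fun r : ℝ => ∫ z in Metric.closedBall 0 2,
      |r ^ (p - 2) * (u (r • z)).toReal - Θ * rieszKernel p ‖z‖|) (𝓝[>] 0) (𝓝 0))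
    {τ : ℝ} (hτ : 0 < τ) (hτ2 : τ ≤ 1 / 2) :
    ∀ᶠ x in 𝓝[≠] 0, |‖x‖ ^ (p - 2) * ballAvg u x (‖x‖ * τ)| ≤ |Θ| * (1 / 2) ^ (2 - p) + 1 := by
  have hlim := (hconv.const_mul (volume.real (Metric.closedBall (0 : EucSp n) τ))⁻¹).comp
    (tendsto_norm_nhdsNE_zero (E := EucSp n))
  rw [mul_zero] at hlim
  have hsmall : ∀ᶠ x : EucSp n in 𝓝[≠] 0, ‖x‖ < ρ / 2 :=
    ((tendsto_norm_zero (E := EucSp n)).mono_left nhdsWithin_le_nhds).eventually_lt_const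
      (half_pos hρ)
  filter_upwards [hlim.eventually_lt_const one_pos, hsmall, self_mem_nhdsWithin] with x hx hxρ hx0
  have hr : 0 < ‖x‖ := norm_pos_iff.2 hx0
  have h := abs_mul_ballAvg_le hp hpn hu Θ (e := ‖x‖⁻¹ • x) (norm_smul_inv_norm hx0) hr
    (by linarith) hτ hτ2
  rw [smul_inv_smul₀ hr.ne'] at h
  exact h.trans (by gcongr; exact hx.le)

theorem tendsto_density_zero (hp : 2 < p) (hpn : p ≤ n) {ρ : ℝ} (hρ : 0 < ρ)
    (hu : IntegrableOn (fun y => (u y).toReal) (Metric.closedBall 0 ρ)) {Θ : ℝ}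
    (hconv : Tendsto (fun r : ℝ => ∫ z in Metric.closedBall 0 2,
      |r ^ (p - 2) * (u (r • z)).toReal - Θ * rieszKernel p ‖z‖|) (𝓝[>] 0) (𝓝 0))
    {d : EucSp n → ℝ} (hd : ∀ᶠ x in 𝓝[≠] 0, 0 ≤ d x)
    (hslope : ∀ᶠ x in 𝓝[≠] 0, ∀ a b, 0 < a → a < b → b ≤ ρ →
      d x * (a ^ (2 - p) - b ^ (2 - p)) ≤ ballAvg u x b - ballAvg u x a) :
    Tendsto d (𝓝[≠] 0) (𝓝 0) := by
  refine tendsto_zero_of_forall_eventually_mul_rpow_le (q := 2 - p) (b := 1 / 2)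
    (C := 2 * (|Θ| * (1 / 2) ^ (2 - p) + 1)) (by linarith) one_half_pos hd fun τ hτ hτ2 => ?_
  have hsmall : ∀ᶠ x : EucSp n in 𝓝[≠] 0, ‖x‖ < ρ :=
    ((tendsto_norm_zero (E := EucSp n)).mono_left nhdsWithin_le_nhds).eventually_lt_const hρ
  filter_upwards [eventually_abs_mul_ballAvg_le hp hpn hρ hu hconv hτ hτ2.le,
    eventually_abs_mul_ballAvg_le hp hpn hρ hu hconv one_half_pos le_rfl, hslope, hsmall,
    self_mem_nhdsWithin] with x hτx hhalf hx hxρ hx0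
  have hr : 0 < ‖x‖ := norm_pos_iff.2 hx0
  have hrr : ‖x‖ ^ (p - 2) * ‖x‖ ^ (2 - p) = 1 := by
    rw [← Real.rpow_add hr, sub_add_sub_cancel, sub_self, Real.rpow_zero]
  have hscale := mul_le_mul_of_nonneg_left (hx (‖x‖ * τ) (‖x‖ * (1 / 2)) (by positivity)
    (by gcongr) (by linarith)) (Real.rpow_nonneg hr.le (p - 2))
  rw [Real.mul_rpow hr.le hτ.le, Real.mul_rpow hr.le one_half_pos.le] at hscale
  calc d x * (τ ^ (2 - p) - (1 / 2) ^ (2 - p))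
      = ‖x‖ ^ (p - 2) *
          (d x * (‖x‖ ^ (2 - p) * τ ^ (2 - p) - ‖x‖ ^ (2 - p) * (1 / 2) ^ (2 - p))) := by
        linear_combination -(d x * (τ ^ (2 - p) - (1 / 2) ^ (2 - p))) * hrr
    _ ≤ ‖x‖ ^ (p - 2) * (ballAvg u x (‖x‖ * (1 / 2)) - ballAvg u x (‖x‖ * τ)) := hscale
    _ ≤ 2 * (|Θ| * (1 / 2) ^ (2 - p) + 1) := by
        linarith [(abs_le.1 hτx).1, (abs_le.1 hhalf).2]

end Tangent

/-- If strong uniqueness of tangents holds for `u` at `0` (the rescalings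
`u_r(x) = r^{p−2} u(rx)` converge in `L¹_loc` to `Θ K_p(|x|)`), then the volume
density exists near `0` and tends to `0` as `x → 0`, `x ≠ 0`. -/
theorem stmt12 (n : ℕ) (hn : 1 ≤ n) (p : ℝ) (hp : 2 < p)
    (F : Set (Matrix (Fin n) (Fin n) ℝ))
    (hF : IsConeSubequation F) (hFconv : Convex ℝ F)
    (hST : STInvariant F) (hchar : HasRieszChar F p)
    (Ω : Set (EucSp n)) (hΩ : IsOpen Ω) (h0 : (0 : EucSp n) ∈ Ω)
    (u : EucSp n → EReal) (hu : IsFSubharmonicOn F Ω u)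
    (hloc : LocallyIntegrableOn (fun y => (u y).toReal) Ω
      (volume : Measure (EucSp n)))
    (hae : ∀ᵐ y ∂(volume : Measure (EucSp n)), y ∈ Ω → u y ≠ ⊥)
    (Θ : ℝ) (hΘ : 0 ≤ Θ)
    (hconv : ∀ R : ℝ, 0 < R →
      Tendsto (fun r : ℝ =>
          ∫ x in Metric.closedBall (0 : EucSp n) R,
            |r ^ (p - 2) * (u (r • x)).toReal - Θ * rieszKernel p ‖x‖|)
        (𝓝[>] 0) (𝓝 0)) :
    ∃ ρ : ℝ, 0 < ρ ∧ ∃ d : EucSp n → ℝ,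
      (∀ x : EucSp n, x ≠ 0 → ‖x‖ < ρ →
        Tendsto (fun t : ℝ => ballAvg u x t / rieszKernel p t) (𝓝[>] 0) (𝓝 (d x))) ∧
      Tendsto d (𝓝[≠] (0 : EucSp n)) (𝓝 0) := by
  obtain ⟨R, hR, hRΩ⟩ := Metric.nhds_basis_closedBall.mem_iff.1 (hΩ.mem_nhds h0)
  set ρ := R / 3 with hρR
  have hρ : 0 < ρ := by positivity
  have hball : ∀ x : EucSp n, ‖x‖ < ρ → Metric.closedBall x (2 * ρ) ⊆ Ω := fun x hx =>
    (Metric.closedBall_subset_closedBall' (by rw [dist_zero_right]; linarith)).trans hRΩ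
  choose! d hd0 hd hslope using fun (x : EucSp n) (hx : ‖x‖ < ρ) =>
    hu.exists_density hp hF hFconv hST hchar hΩ hae hloc hρ (by linarith : ρ < 2 * ρ) (hball x hx)
  have hnear : ∀ᶠ x : EucSp n in 𝓝[≠] 0, ‖x‖ < ρ :=
    ((tendsto_norm_zero (E := EucSp n)).mono_left nhdsWithin_le_nhds).eventually_lt_const hρ
  have hint : IntegrableOn (fun y => (u y).toReal) (Metric.closedBall 0 ρ) :=
    hloc.integrableOn_compact_subset ((Metric.closedBall_subset_closedBall (by linarith)).trans hRΩ)
      (isCompact_closedBall 0 ρ)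
  exact ⟨ρ, hρ, d, fun x _ hx => hd x hx, tendsto_density_zero hp
    (hchar.le_dim hn hF hFconv) hρ hint (hconv 2 two_pos) (hnear.mono hd0) (hnear.mono hslope)⟩

end
end

section
/- Let n ≥ 2 and let G be a closed subgroup of the orthogonal group O(n) that acts transitively on the unit sphere S^{n−1} ⊂ ℝⁿ. Let f : S^{n−1} → ℝ be a function with the property that for every g ∈ G the function x ↦ max{f(x), f(gx)} is continuously differentiable (C¹) on S^{n−1}. Then f is constant. -/
open Set Filter Topology Matrix Metric
open scoped Manifold

noncomputable section

/-! Where `f (g x) = f x`, the maximum of `f` and `f ∘ g` can only be differentiable at `x` if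
`d(f ∘ g)_x = df_x`. So if `df_x v > 0`, compactness of `G` provides a single `y`, slightly beyond
`x` in the direction `v`, with `f (g y) > f x` for all `g ∈ G` such that `f (g x) ≥ f x`. Writing
`y = k x`, right translation by `k` maps the compact set `{g | f (g x) ≥ f x}` strictly uphill, by
a uniform amount. This contradicts that `1` is a cluster point of the powers of `k`. Hence `df = 0`,
and `f` is constant because the sphere is connected. -/

section Recurrence

variable {G : Type*} [Group G] [TopologicalSpace G] [IsTopologicalGroup G] [CompactSpace G]

theorem exists_apply_one_le_and_apply_mul_le {α : Type*} [LinearOrder α] [TopologicalSpace α]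
    [OrderClosedTopology α] {φ : G → α} (hφ : Continuous φ) (k : G) :
    ∃ g, φ 1 ≤ φ g ∧ φ (g * k) ≤ φ 1 := by
  by_contra! hlt
  have hcompact : IsCompact {g | φ 1 ≤ φ g} := (isClosed_le continuous_const hφ).isCompact
  obtain ⟨g₀, hg₀, hmin⟩ := hcompact.exists_isMinOn ⟨1, le_rfl⟩
    (hφ.comp (continuous_mul_const k)).continuousOn
  have hpow (m : ℕ) : φ (g₀ * k) ≤ φ (k ^ (m + 1)) := by
    induction m with
    | zero => simpa using hmin (le_refl (φ 1))
    | succ m ih => exact pow_succ k (m + 1) ▸ hmin ((hlt g₀ hg₀).le.trans ih)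
  have hfreq : ∃ᶠ m : ℕ in atTop, φ (k ^ m) < φ (g₀ * k) :=
    (mapClusterPt_one_atTop_pow k).frequently
      (hφ.continuousAt.eventually_lt_const (hlt g₀ hg₀))
  obtain ⟨m, hm, hm1⟩ := (hfreq.and_eventually (eventually_ge_atTop 1)).exists
  obtain ⟨d, rfl⟩ := Nat.exists_eq_add_of_le' hm1
  exact (hpow d).not_gt hm

end Recurrence

section Calculus

variable {E : Type*} [NormedAddCommGroup E] [NormedSpace ℝ E]

theorem fderiv_eq_of_eventuallyLE {a b : E → ℝ} {x : E} (ha : DifferentiableAt ℝ a x)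
    (hb : DifferentiableAt ℝ b x) (hle : a ≤ᶠ[𝓝 x] b) (heq : a x = b x) :
    fderiv ℝ a x = fderiv ℝ b x := by
  have hmin : IsLocalMin (fun z => b z - a z) x := by
    filter_upwards [hle] with z hz
    simpa [heq] using hz
  have hzero := hmin.fderiv_eq_zero
  rw [fderiv_fun_sub hb ha, sub_eq_zero] at hzero
  exact hzero.symm

theorem fderiv_eq_of_differentiableAt_max {a b : E → ℝ} {x : E} (ha : DifferentiableAt ℝ a x)
    (hb : DifferentiableAt ℝ b x) (hmax : DifferentiableAt ℝ (fun z => max (a z) (b z)) x)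
    (heq : a x = b x) : fderiv ℝ a x = fderiv ℝ b x :=
  (fderiv_eq_of_eventuallyLE ha hmax (.of_forall fun _ => le_max_left _ _) (by simp [heq])).trans
    (fderiv_eq_of_eventuallyLE hb hmax (.of_forall fun _ => le_max_right _ _) (by simp [heq])).symm

theorem eventually_lt_apply_add_smul_of_hasStrictFDerivAt {F : E → ℝ} {F' : E →L[ℝ] ℝ} {z w : E}
    (hF : HasStrictFDerivAt F F' z) (hw : 0 < F' w) :
    ∀ᶠ p : ℝ × E × E in 𝓝 (0, z, w), 0 < p.1 → F p.2.1 < F (p.2.1 + p.1 • p.2.2) := by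
  obtain ⟨ε, hε, hεw⟩ : ∃ ε > 0, ε * ‖w‖ < F' w := by
    refine ⟨F' w / (‖w‖ + 1), by positivity, ?_⟩
    rw [div_mul_eq_mul_div, div_lt_iff₀ (by positivity)]
    linarith
  have hends : Tendsto (fun p : ℝ × E × E => (p.2.1 + p.1 • p.2.2, p.2.1)) (𝓝 (0, z, w))
      (𝓝 (z, z)) := by
    have hcont : Continuous fun p : ℝ × E × E => (p.2.1 + p.1 • p.2.2, p.2.1) := by fun_prop
    simpa using hcont.tendsto (0, z, w)
  have hslope : ∀ᶠ p : ℝ × E × E in 𝓝 (0, z, w), ε * ‖p.2.2‖ < F' p.2.2 := by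
    have hl : Continuous fun p : ℝ × E × E => ε * ‖p.2.2‖ := by fun_prop
    have hr : Continuous fun p : ℝ × E × E => F' p.2.2 := by fun_prop
    exact hl.continuousAt.eventually_lt hr.continuousAt hεw
  filter_upwards [hends.eventually (hF.isLittleO.def hε), hslope] with ⟨t, x, v⟩ herr hv ht
  simp only [add_sub_cancel_left, map_smul, smul_eq_mul, norm_smul, Real.norm_eq_abs,
    abs_of_pos ht] at herr
  have hgain : ε * (t * ‖v‖) < t * F' v := by
    rw [mul_left_comm]
    exact mul_lt_mul_of_pos_left hv ht
  linarith [(abs_le.1 herr).1]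

end Calculus

section LinearAction

variable {E : Type*} [NormedAddCommGroup E] [NormedSpace ℝ E] {F : E → ℝ} {x : E}

theorem fderiv_apply_of_differentiableAt_max {L : E →L[ℝ] E} (hx : DifferentiableAt ℝ F x)
    (hLx : DifferentiableAt ℝ F (L x))
    (hmax : DifferentiableAt ℝ (fun z => max (F z) (F (L z))) x) (heq : F (L x) = F x) (v : E) :
    fderiv ℝ F (L x) (L v) = fderiv ℝ F x v := by
  have hcomp : HasFDerivAt (fun z => F (L z)) ((fderiv ℝ F (L x)).comp L) x :=
    hLx.hasFDerivAt.comp x L.hasFDerivAt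
  rw [fderiv_eq_of_differentiableAt_max hx hcomp.differentiableAt hmax heq.symm, hcomp.fderiv,
    ContinuousLinearMap.comp_apply]

theorem eventually_forall_lt_apply_add_smul {X : Type*} [TopologicalSpace X] [CompactSpace X]
    {A : X → E →L[ℝ] E} (hA : Continuous A) (hF : ∀ g, ContDiffAt ℝ 1 F (A g x)) {c : ℝ} {v : E}
    (hv : ∀ g, F (A g x) = c → 0 < fderiv ℝ F (A g x) (A g v)) :
    ∀ᶠ t : ℝ in 𝓝 0, ∀ g, 0 < t → c ≤ F (A g x) → c < F (A g (x + t • v)) := by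
  suffices h : ∀ g, ∀ᶠ p : ℝ × X in 𝓝 (0, g),
      0 < p.1 → c ≤ F (A p.2 x) → c < F (A p.2 (x + p.1 • v)) by
    simpa only [mem_univ, forall_const] using
      isCompact_univ.eventually_forall_of_forall_eventually fun g _ => h g
  intro g
  have hstart : Tendsto (fun p : ℝ × X => A p.2 x) (𝓝 (0, g)) (𝓝 (A g x)) :=
    (by fun_prop : Continuous fun p : ℝ × X => A p.2 x).tendsto (0, g)
  have hend : Tendsto (fun p : ℝ × X => A p.2 (x + p.1 • v)) (𝓝 (0, g)) (𝓝 (A g x)) := by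
    simpa using (by fun_prop : Continuous fun p : ℝ × X => A p.2 (x + p.1 • v)).tendsto (0, g)
  have hFg := (hF g).continuousAt.tendsto
  rcases lt_trichotomy (F (A g x)) c with hlt | heq | hgt
  · filter_upwards [(hFg.comp hstart).eventually_lt_const hlt] with p hp _ hle
    exact absurd hle hp.not_ge
  · have hjoint : Tendsto (fun p : ℝ × X => (p.1, A p.2 x, A p.2 v)) (𝓝 (0, g))
        (𝓝 (0, A g x, A g v)) :=
      (by fun_prop : Continuous fun p : ℝ × X => (p.1, A p.2 x, A p.2 v)).tendsto (0, g)
    have hstrict := (hF g).hasStrictFDerivAt one_ne_zero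
    filter_upwards [hjoint.eventually
      (eventually_lt_apply_add_smul_of_hasStrictFDerivAt hstrict (hv g heq))] with p hp hpos hle
    rw [map_add, map_smul]
    exact hle.trans_lt (hp hpos)
  · filter_upwards [(hFg.comp hend).eventually_const_lt hgt] with p hp _ _
    exact hp

theorem fderiv_eq_zero_of_differentiableAt_max {G : Type*} [Group G] [TopologicalSpace G]
    [IsTopologicalGroup G] [CompactSpace G] {ρ : G →* E →L[ℝ] E} (hρ : Continuous ρ)
    (hF : ∀ g, ContDiffAt ℝ 1 F (ρ g x))
    (hmax : ∀ g, DifferentiableAt ℝ (fun z => max (F z) (F (ρ g z))) x)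
    (horbit : ∀ᶠ y in 𝓝 x, ∃ k, ∀ g, F (ρ g (ρ k x)) = F (ρ g y)) :
    fderiv ℝ F x = 0 := by
  by_contra hne
  have hdiff (g : G) : DifferentiableAt ℝ F (ρ g x) := (hF g).differentiableAt one_ne_zero
  have hdiff_x : DifferentiableAt ℝ F x := by simpa using hdiff 1
  obtain ⟨v, hv⟩ : ∃ v, 0 < fderiv ℝ F x v := by
    obtain ⟨w, hw⟩ := ContinuousLinearMap.exists_ne_zero hne
    rcases hw.lt_or_gt with hneg | hpos
    · exact ⟨-w, by simpa using hneg⟩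
    · exact ⟨w, hpos⟩
  have huphill := eventually_forall_lt_apply_add_smul hρ hF fun g hg => by
    rwa [fderiv_apply_of_differentiableAt_max hdiff_x (hdiff g) (hmax g) hg v]
  have hline : Tendsto (fun t : ℝ => x + t • v) (𝓝 0) (𝓝 x) := by
    simpa using (by fun_prop : Continuous fun t : ℝ => x + t • v).tendsto 0
  obtain ⟨t, ⟨hup, k, hk⟩, ht⟩ := (((huphill.and (hline.eventually horbit)).filter_mono
    nhdsWithin_le_nhds).and (self_mem_nhdsWithin : Ioi (0 : ℝ) ∈ 𝓝[>] 0)).exists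
  have horbit_cont : Continuous fun g => F (ρ g x) :=
    continuous_iff_continuousAt.2 fun g =>
      ContinuousAt.comp (f := fun g => ρ g x) (hF g).continuousAt (by fun_prop)
  obtain ⟨g, hle, hge⟩ := exists_apply_one_le_and_apply_mul_le horbit_cont k
  rw [map_one, one_apply_eq_self] at hle hge
  rw [map_mul, mul_apply_eq_comp, hk] at hge
  exact hge.not_gt (hup g ht hle)

end LinearAction

section Sphere

open NormedSpace (normalize normalize_eq_self_of_norm_eq_one)

variable {E : Type*} [NormedAddCommGroup E]

section NormedSpace

variable [NormedSpace ℝ E]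

/-- The extension of a function on the unit sphere to the whole space that is constant on open
rays from the origin; it transfers calculus on the sphere to calculus on the ambient space.
Its value at the origin is the junk value `0`. -/
def radialExtension (f : sphere (0 : E) 1 → ℝ) (z : E) : ℝ :=
  Function.extend Subtype.val f 0 (normalize z)

theorem radialExtension_eq_of_normalize_eq (f : sphere (0 : E) 1 → ℝ) {z : E}
    {a : sphere (0 : E) 1} (h : normalize z = a) : radialExtension f z = f a := by
  rw [radialExtension, h, Subtype.val_injective.extend_apply]

theorem radialExtension_coe (f : sphere (0 : E) 1 → ℝ) (a : sphere (0 : E) 1) :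
    radialExtension f a = f a :=
  radialExtension_eq_of_normalize_eq f (normalize_eq_self_of_norm_eq_one (norm_eq_of_mem_sphere a))

theorem exists_sphere_normalize_eq {z : E} (hz : z ≠ 0) :
    ∃ a : sphere (0 : E) 1, normalize z = a :=
  ⟨⟨normalize z, by simpa using hz⟩, rfl⟩

/-- The self-map of the unit sphere induced by a norm-preserving operator. -/
def sphereMap (L : E →L[ℝ] E) (hL : ∀ z, ‖L z‖ = ‖z‖) (a : sphere (0 : E) 1) : sphere (0 : E) 1 :=
  ⟨L a, by simp [hL]⟩

theorem normalize_apply_of_norm_map {L : E →L[ℝ] E} (hL : ∀ z, ‖L z‖ = ‖z‖) (z : E) :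
    normalize (L z) = L (normalize z) := by
  rw [NormedSpace.normalize, NormedSpace.normalize, hL, map_smul]

theorem radialExtension_apply_eq_of_normalize_eq (f : sphere (0 : E) 1 → ℝ) {L : E →L[ℝ] E}
    (hL : ∀ z, ‖L z‖ = ‖z‖) {z : E} {a : sphere (0 : E) 1} (h : normalize z = a) :
    radialExtension f (L z) = f (sphereMap L hL a) :=
  radialExtension_eq_of_normalize_eq f (by rw [normalize_apply_of_norm_map hL, h]; rfl)

end NormedSpace

theorem contDiffAt_radialExtension [InnerProductSpace ℝ E] {m : ℕ}
    [Fact (Module.finrank ℝ E = m + 1)] {f : sphere (0 : E) 1 → ℝ} {k : ℕ∞}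
    (hf : ContMDiff (𝓡 m) 𝓘(ℝ, ℝ) k f) {z : E} (hz : z ≠ 0) :
    ContDiffAt ℝ k (radialExtension f) z := by
  let U : TopologicalSpace.Opens E := ⟨{0}ᶜ, isOpen_compl_singleton⟩
  have hne (w : U) : (w : E) ≠ 0 := w.2
  have hnormalize : ContMDiff 𝓘(ℝ, E) 𝓘(ℝ, E) k fun w : U => normalize (w : E) := fun w =>
    contMDiffAt_subtype_iff.2 <| ContDiffAt.contMDiffAt <|
      ((contDiffAt_norm ℝ (hne w)).inv (norm_ne_zero_iff.2 (hne w))).smul contDiffAt_id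
  have hmem (w : U) : normalize (w : E) ∈ sphere (0 : E) 1 := by simpa using hne w
  have hcomp := hf.comp (hnormalize.codRestrict_sphere (n := m) hmem)
  rw [← contMDiffAt_iff_contDiffAt]
  refine (contMDiffAt_subtype_iff (U := U) (x := ⟨z, hz⟩)).1 ?_
  refine hcomp.contMDiffAt.congr_of_eventuallyEq (.of_forall fun w => ?_)
  exact radialExtension_eq_of_normalize_eq f rfl

end Sphere

theorem stmt13_general {E : Type*} [NormedAddCommGroup E] [InnerProductSpace ℝ E] {m : ℕ}
    [Fact (Module.finrank ℝ E = m + 1)] (hm : 1 ≤ m)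
    {G : Type*} [Group G] [TopologicalSpace G] [IsTopologicalGroup G] [CompactSpace G]
    {ρ : G →* E →L[ℝ] E} (hρ : Continuous ρ) (hnorm : ∀ g z, ‖ρ g z‖ = ‖z‖)
    (htrans : ∀ a b : E, ‖a‖ = 1 → ‖b‖ = 1 → ∃ g, ρ g a = b) {f : sphere (0 : E) 1 → ℝ}
    (hf : ∀ g, ContMDiff (𝓡 m) 𝓘(ℝ, ℝ) 1 fun a => max (f a) (f (sphereMap (ρ g) (hnorm g) a)))
    (a b : sphere (0 : E) 1) : f a = f b := by
  have hF {z : E} (hz : z ≠ 0) : ContDiffAt ℝ 1 (radialExtension f) z :=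
    contDiffAt_radialExtension (by simpa [sphereMap] using hf 1) hz
  have hmax {z : E} (hz : z ≠ 0) (g : G) :
      DifferentiableAt ℝ (fun w => max (radialExtension f w) (radialExtension f (ρ g w))) z := by
    refine ((contDiffAt_radialExtension (hf g) hz).differentiableAt
      one_ne_zero).congr_of_eventuallyEq ?_
    filter_upwards [isOpen_ne.mem_nhds hz] with w hw
    obtain ⟨c, hc⟩ := exists_sphere_normalize_eq hw
    simp only [radialExtension_eq_of_normalize_eq _ hc,
      radialExtension_apply_eq_of_normalize_eq _ (hnorm g) hc]
  have horbit {z : E} (hz : z ≠ 0) : ∀ᶠ w in 𝓝 z, ∃ k, ∀ g,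
      radialExtension f (ρ g (ρ k z)) = radialExtension f (ρ g w) := by
    filter_upwards [isOpen_ne.mem_nhds hz] with w hw
    obtain ⟨k, hk⟩ := htrans _ _ (NormedSpace.norm_normalize hz) (NormedSpace.norm_normalize hw)
    refine ⟨k, fun g => ?_⟩
    simp only [radialExtension, normalize_apply_of_norm_map (hnorm _), hk]
  have hfderiv : EqOn (fderiv ℝ (radialExtension f)) 0 {0}ᶜ := fun z hz =>
    fderiv_eq_zero_of_differentiableAt_max hρ
      (fun g => hF (norm_ne_zero_iff.1 (hnorm g z ▸ norm_ne_zero_iff.2 hz))) (hmax hz) (horbit hz)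
  have hrank : 1 < Module.rank ℝ E := by
    have hfinrank : Module.finrank ℝ E = m + 1 := Fact.out
    exact Module.lt_rank_of_lt_finrank (by lia)
  have hconst := isOpen_compl_singleton.is_const_of_fderiv_eq_zero
    (isConnected_compl_singleton_of_one_lt_rank hrank 0).isPreconnected
    (fun z hz => ((hF hz).differentiableAt one_ne_zero).differentiableWithinAt) hfderiv
    (ne_zero_of_mem_unit_sphere a) (ne_zero_of_mem_unit_sphere b)
  simpa only [radialExtension_coe] using hconst

section OrthogonalGroup

variable {n : Type*} [Fintype n] [DecidableEq n]

instance compactSpace_orthogonalGroup_s13 : CompactSpace (Matrix.orthogonalGroup n ℝ) := by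
  have hbox : IsCompact (univ.pi fun _ : n => univ.pi fun _ : n => Icc (-1 : ℝ) 1) :=
    isCompact_univ_pi fun _ => isCompact_univ_pi fun _ => isCompact_Icc
  have hclosed : IsClosed (Matrix.orthogonalGroup n ℝ : Set (Matrix n n ℝ)) := isClosed_unitary
  refine isCompact_iff_compactSpace.1
    (IsCompact.of_isClosed_subset (X := Matrix n n ℝ) hbox hclosed ?_)
  exact fun g hg i _ j _ => abs_le.1 (entry_norm_bound_of_unitary hg i j)

/-- A set of matrices containing `1` and closed under products and inverses, cut down to a subgroup
of the orthogonal group. -/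
def orthogonalSubgroup (G : Set (Matrix n n ℝ)) (hone : 1 ∈ G)
    (hmul : ∀ g ∈ G, ∀ h ∈ G, g * h ∈ G) (hinv : ∀ g ∈ G, g⁻¹ ∈ G) :
    Subgroup (Matrix.orthogonalGroup n ℝ) where
  carrier := Subtype.val ⁻¹' G
  one_mem' := hone
  mul_mem' hu hv := hmul _ hu _ hv
  inv_mem' {u} hu := by
    have hinv_eq : (u : Matrix n n ℝ)⁻¹ = ↑u⁻¹ :=
      Matrix.inv_eq_left_inv (congrArg Subtype.val (inv_mul_cancel u))
    exact mem_preimage.2 (hinv_eq ▸ hinv _ hu)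

/-- The defining representation of the orthogonal group on Euclidean space. -/
def orthogonalRepresentation :
    Matrix.orthogonalGroup n ℝ →* EuclideanSpace ℝ n →L[ℝ] EuclideanSpace ℝ n :=
  (toEuclideanCLM (n := n) (𝕜 := ℝ) : Matrix n n ℝ →* _).comp (Matrix.orthogonalGroup n ℝ).subtype

theorem continuous_orthogonalRepresentation : Continuous (orthogonalRepresentation (n := n)) :=
  (LinearMap.continuous_of_finiteDimensional
    (toEuclideanCLM (n := n) (𝕜 := ℝ)).toAlgEquiv.toLinearMap).comp continuous_subtype_val

theorem norm_orthogonalRepresentation_apply (u : Matrix.orthogonalGroup n ℝ)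
    (z : EuclideanSpace ℝ n) : ‖orthogonalRepresentation u z‖ = ‖z‖ := by
  have hmem : toEuclideanCLM (n := n) (𝕜 := ℝ) u ∈
      unitary (EuclideanSpace ℝ n →L[ℝ] EuclideanSpace ℝ n) :=
    Unitary.map_mem (toEuclideanCLM (n := n) (𝕜 := ℝ)) u.2
  exact ContinuousLinearMap.norm_map_of_mem_unitary hmem z

end OrthogonalGroup

/-- If `G` is a closed subgroup of `O(n)` acting transitively on the unit sphere
`S^{n−1} ⊂ ℝⁿ` (`n ≥ 2`) and `f : S^{n−1} → ℝ` is such that `x ↦ max (f x) (f (g x))`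
is `C¹` on the sphere for every `g ∈ G`, then `f` is constant. -/
theorem stmt13 (n : ℕ) (hn : 2 ≤ n)
    [Fact (Module.finrank ℝ (EuclideanSpace ℝ (Fin n)) = n - 1 + 1)]
    (G : Set (Matrix (Fin n) (Fin n) ℝ))
    (hGsub : G ⊆ (Matrix.orthogonalGroup (Fin n) ℝ : Set (Matrix (Fin n) (Fin n) ℝ)))
    (hGclosed : IsClosed G)
    (hG1 : (1 : Matrix (Fin n) (Fin n) ℝ) ∈ G)
    (hGmul : ∀ g ∈ G, ∀ h ∈ G, g * h ∈ G)
    (hGinv : ∀ g ∈ G, g⁻¹ ∈ G)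
    (hGtrans : ∀ x y : EuclideanSpace ℝ (Fin n), ‖x‖ = 1 → ‖y‖ = 1 →
      ∃ g ∈ G, Matrix.toEuclideanLin g x = y)
    (f : sphere (0 : EuclideanSpace ℝ (Fin n)) 1 → ℝ)
    (hf : ∀ g ∈ G,
      ∀ σ : sphere (0 : EuclideanSpace ℝ (Fin n)) 1 → sphere (0 : EuclideanSpace ℝ (Fin n)) 1,
        (∀ x : sphere (0 : EuclideanSpace ℝ (Fin n)) 1,
          ((σ x : EuclideanSpace ℝ (Fin n)) = Matrix.toEuclideanLin g (x : EuclideanSpace ℝ (Fin n)))) →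
        ContMDiff (𝓡 (n - 1)) 𝓘(ℝ, ℝ) 1 (fun x => max (f x) (f (σ x)))) :
    ∀ x y : sphere (0 : EuclideanSpace ℝ (Fin n)) 1, f x = f y := by
  let H := orthogonalSubgroup G hG1 hGmul hGinv
  have : CompactSpace H :=
    isCompact_iff_compactSpace.1 (hGclosed.preimage continuous_subtype_val).isCompact
  exact stmt13_general (by lia) (G := H) (ρ := orthogonalRepresentation.comp H.subtype)
    (continuous_orthogonalRepresentation.comp continuous_subtype_val)
    (fun u => norm_orthogonalRepresentation_apply u.1)
    (fun x y hx hy =>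
      let ⟨g, hg, hgx⟩ := hGtrans x y hx hy
      ⟨⟨⟨g, hGsub hg⟩, hg⟩, hgx⟩)
    fun u => hf _ u.2 _ fun _ => rfl

end
end
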